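/- Let g and E be the reference functions defined from the Dirichlet square energies and the vanishing-field strip energies respectively. Then E(L) = 2 L^{-4/3} ∫₀¹ g(b) db + o(L^{-4/3}) as L → 0⁺; equivalently, L^{4/3} E(L) converges to 2∫₀¹ g(b) db as L → 0⁺. -/

import Mathlib

open MeasureTheory Real Set Filter Topology

noncomputable section

/-- The open square `Q_r = (-r/2, r/2) × (-r/2, r/2)`. -/
def Qsq (r : ℝ) : Set (ℝ × ℝ) := Ioo (-r/2) (r/2) ×ˢ Ioo (-r/2) (r/2)

/-- The vertical strip `S_R = (-R/2, R/2) × ℝ`. -/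
def Strip (R : ℝ) : Set (ℝ × ℝ) := Ioo (-R/2) (R/2) ×ˢ (univ : Set ℝ)

/-- The magnetic potential `A₀(x) = (-x₂/2, x₁/2)` of the constant unit magnetic field. -/
def A₀ (x : ℝ × ℝ) : ℝ × ℝ := (-x.2 / 2, x.1 / 2)

/-- The magnetic potential `A_van(x) = (-x₂²/2, 0)` generating the field `B(x) = x₂`. -/
def Avan (x : ℝ × ℝ) : ℝ × ℝ := (-x.2 ^ 2 / 2, 0)

/-- The magnetic gradient energy density `|(∇ - iA)u|²` at `x`. -/
def magGradSq (A : ℝ × ℝ → ℝ × ℝ) (u : ℝ × ℝ → ℂ) (x : ℝ × ℝ) : ℝ :=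
  ‖fderiv ℝ u x (1, 0) - Complex.I * ((A x).1 : ℂ) * u x‖ ^ 2 +
  ‖fderiv ℝ u x (0, 1) - Complex.I * ((A x).2 : ℂ) * u x‖ ^ 2

/-- The Ginzburg–Landau functional `F_{b,Q_r}` on the square `Q_r`. -/
def Fsq (b r : ℝ) (u : ℝ × ℝ → ℂ) : ℝ :=
  ∫ x in Qsq r, (b * magGradSq A₀ u x - ‖u x‖ ^ 2 + ‖u x‖ ^ 4 / 2)

/-- (Smooth surrogate of) membership in `H¹(Q_r; ℂ)`. -/
def MemH1sq (u : ℝ × ℝ → ℂ) : Prop := ContDiff ℝ 1 u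

/-- (Smooth surrogate of) membership in `H¹₀(Q_r; ℂ)`: vanishing on the boundary. -/
def MemH10sq (r : ℝ) (u : ℝ × ℝ → ℂ) : Prop :=
  ContDiff ℝ 1 u ∧ ∀ x ∈ frontier (Qsq r), u x = 0

/-- The Dirichlet ground-state energy `e_D(b, r)`. -/
def eD (b r : ℝ) : ℝ := sInf (Fsq b r '' {u | MemH10sq r u})

/-- The Neumann ground-state energy `e_N(b, r)`. -/
def eN (b r : ℝ) : ℝ := sInf (Fsq b r '' {u | MemH1sq u})

/-- The energy density of the strip functional `𝓔_{L,R}` at `x`. -/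
def stripDensity (L : ℝ) (u : ℝ × ℝ → ℂ) (x : ℝ × ℝ) : ℝ :=
  magGradSq Avan u x - L ^ (-(2:ℝ)/3) * ‖u x‖ ^ 2 + (L ^ (-(2:ℝ)/3) / 2) * ‖u x‖ ^ 4

/-- The strip functional `𝓔_{L,R}`. -/
def Estrip (L R : ℝ) (u : ℝ × ℝ → ℂ) : ℝ := ∫ x in Strip R, stripDensity L u x

/-- (Surrogate of) membership in the space `H¹_{mag,0}(S_R)`. -/
def MemH1mag0 (R : ℝ) (u : ℝ × ℝ → ℂ) : Prop :=
  ContDiff ℝ 1 u ∧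
  IntegrableOn (fun x => ‖u x‖ ^ 2) (Strip R) ∧
  IntegrableOn (magGradSq Avan u) (Strip R) ∧
  IntegrableOn (fun x => ‖u x‖ ^ 4) (Strip R) ∧
  ∀ x ∈ frontier (Strip R), u x = 0

/-- The ground-state energy `e_gs(L; R)` of the strip functional. -/
def egs (L R : ℝ) : ℝ := sInf (Estrip L R '' {u | MemH1mag0 R u})

/-- `g : (0,∞) → ℝ` is the thermodynamic limit of the Dirichlet square energies. -/
def IsLimitG (g : ℝ → ℝ) : Prop :=
  ∀ b > 0, Tendsto (fun r => eD b r / r ^ 2) atTop (nhds (g b))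

/-- `E : (0,∞) → ℝ` is the large-`R` limit of the strip energies. -/
def IsLimitE (E : ℝ → ℝ) : Prop :=
  ∀ L > 0, Tendsto (fun R => egs L R / R) atTop (nhds (E L))


/-- first component of the magnetic gradient -/
noncomputable def mD1 (A : ℝ × ℝ → ℝ × ℝ) (u : ℝ × ℝ → ℂ) (x : ℝ × ℝ) : ℂ :=
  fderiv ℝ u x (1, 0) - Complex.I * ((A x).1 : ℂ) * u x

/-- second component of the magnetic gradient -/
noncomputable def mD2 (A : ℝ × ℝ → ℝ × ℝ) (u : ℝ × ℝ → ℂ) (x : ℝ × ℝ) : ℂ :=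
  fderiv ℝ u x (0, 1) - Complex.I * ((A x).2 : ℂ) * u x

lemma mag_eq (A : ℝ × ℝ → ℝ × ℝ) (u : ℝ × ℝ → ℂ) (x : ℝ × ℝ) :
    magGradSq A u x = ‖mD1 A u x‖ ^ 2 + ‖mD2 A u x‖ ^ 2 := rfl

/-- general energy density -/
noncomputable def GD (p q s : ℝ) (A : ℝ × ℝ → ℝ × ℝ) (u : ℝ × ℝ → ℂ) (x : ℝ × ℝ) : ℝ :=
  p * magGradSq A u x - q * ‖u x‖ ^ 2 + s * ‖u x‖ ^ 4

lemma mag_nonneg (A : ℝ × ℝ → ℝ × ℝ) (u : ℝ × ℝ → ℂ) (x : ℝ × ℝ) : 0 ≤ magGradSq A u x := by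
  unfold magGradSq; positivity

lemma mag_congr {A : ℝ × ℝ → ℝ × ℝ} {u v : ℝ × ℝ → ℂ} {x : ℝ × ℝ} (h : u =ᶠ[𝓝 x] v) :
    magGradSq A u x = magGradSq A v x := by
  unfold magGradSq; rw [h.fderiv_eq, h.eq_of_nhds]

lemma GD_congr {p q s : ℝ} {A : ℝ × ℝ → ℝ × ℝ} {u v : ℝ × ℝ → ℂ} {x : ℝ × ℝ}
    (h : u =ᶠ[𝓝 x] v) : GD p q s A u x = GD p q s A v x := by
  unfold GD; rw [mag_congr h, h.eq_of_nhds]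

lemma mag_zero (A : ℝ × ℝ → ℝ × ℝ) (x : ℝ × ℝ) : magGradSq A (fun _ => 0) x = 0 := by
  simp [magGradSq]

lemma GD_zero (p q s : ℝ) (A : ℝ × ℝ → ℝ × ℝ) (x : ℝ × ℝ) : GD p q s A (fun _ => 0) x = 0 := by
  simp [GD, mag_zero]

lemma GD_off {p q s : ℝ} {A : ℝ × ℝ → ℝ × ℝ} {u : ℝ × ℝ → ℂ} {x : ℝ × ℝ}
    (h : x ∉ tsupport u) : GD p q s A u x = 0 := by
  have : u =ᶠ[𝓝 x] (fun _ => 0) := notMem_tsupport_iff_eventuallyEq.1 h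
  rw [GD_congr this, GD_zero]

lemma mag_off {A : ℝ × ℝ → ℝ × ℝ} {u : ℝ × ℝ → ℂ} {x : ℝ × ℝ}
    (h : x ∉ tsupport u) : magGradSq A u x = 0 := by
  have : u =ᶠ[𝓝 x] (fun _ => 0) := notMem_tsupport_iff_eventuallyEq.1 h
  rw [mag_congr this, mag_zero]

lemma fd_cont {u : ℝ × ℝ → ℂ} (hu : ContDiff ℝ 1 u) (e : ℝ × ℝ) :
    Continuous (fun x => fderiv ℝ u x e) :=
  (hu.continuous_fderiv one_ne_zero).clm_apply continuous_const

lemma fd_contR {u : ℝ × ℝ → ℝ} (hu : ContDiff ℝ 1 u) (e : ℝ × ℝ) :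
    Continuous (fun x => fderiv ℝ u x e) :=
  (hu.continuous_fderiv one_ne_zero).clm_apply continuous_const

lemma mD1_cont {A : ℝ × ℝ → ℝ × ℝ} (hA : Continuous A) {u : ℝ × ℝ → ℂ} (hu : ContDiff ℝ 1 u) :
    Continuous (mD1 A u) := by
  unfold mD1
  have h1 := fd_cont hu (1, 0)
  have h3 := hu.continuous
  fun_prop

lemma mD2_cont {A : ℝ × ℝ → ℝ × ℝ} (hA : Continuous A) {u : ℝ × ℝ → ℂ} (hu : ContDiff ℝ 1 u) :
    Continuous (mD2 A u) := by
  unfold mD2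
  have h1 := fd_cont hu (0, 1)
  have h3 := hu.continuous
  fun_prop

lemma mag_cont {A : ℝ × ℝ → ℝ × ℝ} (hA : Continuous A) {u : ℝ × ℝ → ℂ} (hu : ContDiff ℝ 1 u) :
    Continuous (magGradSq A u) := by
  have h1 := mD1_cont hA hu
  have h2 := mD2_cont hA hu
  have : magGradSq A u = fun x => ‖mD1 A u x‖ ^ 2 + ‖mD2 A u x‖ ^ 2 := rfl
  rw [this]
  fun_prop

lemma GD_cont {p q s : ℝ} {A : ℝ × ℝ → ℝ × ℝ} (hA : Continuous A) {u : ℝ × ℝ → ℂ}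
    (hu : ContDiff ℝ 1 u) : Continuous (GD p q s A u) := by
  have h1 := mag_cont hA hu
  have h3 := hu.continuous
  unfold GD
  fun_prop

lemma GD_compact {p q s : ℝ} {A : ℝ × ℝ → ℝ × ℝ} {u : ℝ × ℝ → ℂ}
    (hc : HasCompactSupport u) : HasCompactSupport (GD p q s A u) :=
  HasCompactSupport.intro hc (fun _ hx => GD_off hx)

lemma mag_compact {A : ℝ × ℝ → ℝ × ℝ} {u : ℝ × ℝ → ℂ}
    (hc : HasCompactSupport u) : HasCompactSupport (magGradSq A u) :=
  HasCompactSupport.intro hc (fun _ hx => mag_off hx)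

lemma GD_int {p q s : ℝ} {A : ℝ × ℝ → ℝ × ℝ} (hA : Continuous A) {u : ℝ × ℝ → ℂ}
    (hu : ContDiff ℝ 1 u) (hc : HasCompactSupport u) : Integrable (GD p q s A u) :=
  (GD_cont hA hu).integrable_of_hasCompactSupport (GD_compact hc)

lemma A0_cont : Continuous A₀ := by unfold A₀; fun_prop
lemma Avan_cont : Continuous Avan := by unfold Avan; fun_prop

lemma GD_setInt {p q s : ℝ} {A : ℝ × ℝ → ℝ × ℝ} {u : ℝ × ℝ → ℂ} {U : Set (ℝ × ℝ)}
    (h : tsupport u ⊆ U) : ∫ x in U, GD p q s A u x = ∫ x, GD p q s A u x :=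
  setIntegral_eq_integral_of_forall_compl_eq_zero (fun _ hx => GD_off (fun k => hx (h k)))

/-- real part of conj a * b -/
noncomputable def rp (a b : ℂ) : ℝ := a.re * b.re + a.im * b.im

lemma rp_le (a b : ℂ) : |rp a b| ≤ ‖a‖ * ‖b‖ := by
  apply abs_le_of_sq_le_sq _ (by positivity)
  rw [mul_pow, ← Complex.normSq_eq_norm_sq, ← Complex.normSq_eq_norm_sq]
  simp only [Complex.normSq_apply, rp]
  nlinarith [sq_nonneg (a.re * b.im - a.im * b.re)]

lemma fd_mul {f : ℝ × ℝ → ℝ} {u : ℝ × ℝ → ℂ} {x : ℝ × ℝ} (hf : DifferentiableAt ℝ f x)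
    (hu : DifferentiableAt ℝ u x) (e : ℝ × ℝ) :
    fderiv ℝ (fun y => (f y : ℂ) * u y) x e = (f x : ℂ) * fderiv ℝ u x e
      + (fderiv ℝ f x e : ℂ) * u x := by
  have h1 : HasFDerivAt (fun y => f y • u y) _ x := hf.hasFDerivAt.smul hu.hasFDerivAt
  have h2 : (fun y => (f y : ℂ) * u y) = fun y => f y • u y := by
    ext y; simp
  rw [h2, h1.fderiv]
  simp

lemma norm_add_real_mul (a b : ℂ) (s t : ℝ) :
    ‖(s : ℂ) * a + (t : ℂ) * b‖ ^ 2 = s ^ 2 * ‖a‖ ^ 2 + 2 * s * (t * rp b a) + t ^ 2 * ‖b‖ ^ 2 := by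
  simp only [← Complex.normSq_eq_norm_sq, Complex.normSq_apply, rp]
  simp
  ring

lemma mD1_mul {A : ℝ × ℝ → ℝ × ℝ} {f : ℝ × ℝ → ℝ} {u : ℝ × ℝ → ℂ} {x : ℝ × ℝ}
    (hf : DifferentiableAt ℝ f x) (hu : DifferentiableAt ℝ u x) :
    mD1 A (fun y => (f y : ℂ) * u y) x = (f x : ℂ) * mD1 A u x + (fderiv ℝ f x (1,0) : ℂ) * u x := by
  unfold mD1; rw [fd_mul hf hu]; ring

lemma mD2_mul {A : ℝ × ℝ → ℝ × ℝ} {f : ℝ × ℝ → ℝ} {u : ℝ × ℝ → ℂ} {x : ℝ × ℝ}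
    (hf : DifferentiableAt ℝ f x) (hu : DifferentiableAt ℝ u x) :
    mD2 A (fun y => (f y : ℂ) * u y) x = (f x : ℂ) * mD2 A u x + (fderiv ℝ f x (0,1) : ℂ) * u x := by
  unfold mD2; rw [fd_mul hf hu]; ring

lemma mag_mul {A : ℝ × ℝ → ℝ × ℝ} {f : ℝ × ℝ → ℝ} {u : ℝ × ℝ → ℂ} {x : ℝ × ℝ}
    (hf : DifferentiableAt ℝ f x) (hu : DifferentiableAt ℝ u x) :
    magGradSq A (fun y => (f y : ℂ) * u y) x =
      f x ^ 2 * magGradSq A u x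
      + 2 * f x * fderiv ℝ f x (1,0) * rp (u x) (mD1 A u x)
      + 2 * f x * fderiv ℝ f x (0,1) * rp (u x) (mD2 A u x)
      + ((fderiv ℝ f x (1,0)) ^ 2 + (fderiv ℝ f x (0,1)) ^ 2) * ‖u x‖ ^ 2 := by
  rw [mag_eq, mag_eq, mD1_mul hf hu, mD2_mul hf hu, norm_add_real_mul, norm_add_real_mul]
  ring

/-- cutoff profile -/
noncomputable def th (s : ℝ) : ℝ := Real.smoothTransition (s - 1)

lemma th_smooth : ContDiff ℝ 1 th := by
  unfold th
  exact Real.smoothTransition.contDiff.comp (contDiff_id.sub contDiff_const)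

lemma th_zero {s : ℝ} (h : s ≤ 1) : th s = 0 := Real.smoothTransition.zero_of_nonpos (by linarith)
lemma th_one {s : ℝ} (h : 2 ≤ s) : th s = 1 := Real.smoothTransition.one_of_one_le (by linarith)
lemma th_nonneg (s : ℝ) : 0 ≤ th s := Real.smoothTransition.nonneg _
lemma th_le (s : ℝ) : th s ≤ 1 := Real.smoothTransition.le_one _

lemma th_deriv_bound : ∃ C : ℝ, 0 ≤ C ∧ ∀ s, |s * deriv th s| ≤ C := by
  have hc : Continuous (fun s => s * deriv th s) :=
    continuous_id.mul (th_smooth.continuous_deriv le_rfl)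
  obtain ⟨C, hC⟩ := (isCompact_Icc (a := (1:ℝ)) (b := 2)).exists_bound_of_continuousOn hc.continuousOn
  refine ⟨max C 0, le_max_right _ _, fun s => ?_⟩
  by_cases h1 : s < 1
  · have : th =ᶠ[𝓝 s] fun _ => 0 := by
      filter_upwards [Iio_mem_nhds h1] with y hy using th_zero (le_of_lt hy)
    rw [this.deriv_eq]; simp
  by_cases h2 : 2 < s
  · have : th =ᶠ[𝓝 s] fun _ => 1 := by
      filter_upwards [Ioi_mem_nhds h2] with y hy using th_one (le_of_lt hy)
    rw [this.deriv_eq]; simp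
  exact (hC s ⟨not_lt.1 h1, not_lt.1 h2⟩).trans (le_max_left _ _)


lemma nsq_fderiv {u : ℝ × ℝ → ℂ} {x : ℝ × ℝ} (hu : DifferentiableAt ℝ u x) :
    ∃ f' : ℝ × ℝ →L[ℝ] ℝ, HasFDerivAt (fun y => Complex.normSq (u y)) f' x ∧
      ∀ e, f' e = 2 * rp (u x) (fderiv ℝ u x e) := by
  have h := hu.hasFDerivAt
  have hre : HasFDerivAt (fun y => (u y).re) (Complex.reCLM.comp (fderiv ℝ u x)) x :=
    Complex.reCLM.hasFDerivAt.comp x h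
  have him : HasFDerivAt (fun y => (u y).im) (Complex.imCLM.comp (fderiv ℝ u x)) x :=
    Complex.imCLM.hasFDerivAt.comp x h
  refine ⟨_, (hre.mul hre).add (him.mul him), fun e => ?_⟩
  simp [rp]
  ring

lemma rp_mD1 (A : ℝ × ℝ → ℝ × ℝ) (u : ℝ × ℝ → ℂ) (x : ℝ × ℝ) :
    rp (u x) (fderiv ℝ u x (1,0)) = rp (u x) (mD1 A u x) := by
  simp [rp, mD1]; ring

lemma rp_mD2 (A : ℝ × ℝ → ℝ × ℝ) (u : ℝ × ℝ → ℂ) (x : ℝ × ℝ) :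
    rp (u x) (fderiv ℝ u x (0,1)) = rp (u x) (mD2 A u x) := by
  simp [rp, mD2]; ring

/-- a fixed bump on the plane -/
noncomputable def bmp : ContDiffBump (0 : ℝ × ℝ) := ⟨1, 2, by norm_num, by norm_num⟩

lemma bmp_deriv_bound : ∃ C : ℝ, 0 ≤ C ∧ ∀ y, ‖fderiv ℝ (bmp : ℝ × ℝ → ℝ) y‖ ≤ C := by
  have hc : Continuous (fderiv ℝ (bmp : ℝ × ℝ → ℝ)) :=
    (bmp.contDiff (n := 1)).continuous_fderiv one_ne_zero
  have hs : HasCompactSupport (fderiv ℝ (bmp : ℝ × ℝ → ℝ)) := bmp.hasCompactSupport.fderiv ℝ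
  obtain ⟨C, hC⟩ := hs.exists_bound_of_continuous hc
  exact ⟨C, (norm_nonneg _).trans (hC 0), hC⟩

/-- the cutoff factor -/
noncomputable def cutf (N : ℝ) (u : ℝ × ℝ → ℂ) (x : ℝ × ℝ) : ℝ :=
  bmp (N⁻¹ • x) * th (N * Complex.normSq (u x))

lemma cutf_nonneg (N : ℝ) (u : ℝ × ℝ → ℂ) (x : ℝ × ℝ) : 0 ≤ cutf N u x :=
  mul_nonneg bmp.nonneg (th_nonneg _)

lemma cutf_le (N : ℝ) (u : ℝ × ℝ → ℂ) (x : ℝ × ℝ) : cutf N u x ≤ 1 :=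
  mul_le_one₀ bmp.le_one (th_nonneg _) (th_le _)

lemma normSq_contDiff {u : ℝ × ℝ → ℂ} (hu : ContDiff ℝ 1 u) :
    ContDiff ℝ 1 (fun y => Complex.normSq (u y)) := by
  have hre : ContDiff ℝ 1 (fun y => (u y).re) := Complex.reCLM.contDiff.comp hu
  have him : ContDiff ℝ 1 (fun y => (u y).im) := Complex.imCLM.contDiff.comp hu
  exact (hre.mul hre).add (him.mul him)

lemma cutf_contDiff (N : ℝ) {u : ℝ × ℝ → ℂ} (hu : ContDiff ℝ 1 u) : ContDiff ℝ 1 (cutf N u) := by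
  unfold cutf
  refine ContDiff.mul ?_ ?_
  · exact bmp.contDiff.comp (contDiff_const_smul _)
  · exact th_smooth.comp (contDiff_const.mul (normSq_contDiff hu))

lemma cutf_fderiv {N : ℝ} {u : ℝ × ℝ → ℂ} (hu : ContDiff ℝ 1 u) (x e : ℝ × ℝ) :
    fderiv ℝ (cutf N u) x e = N⁻¹ * fderiv ℝ (bmp : ℝ × ℝ → ℝ) (N⁻¹ • x) e * th (N * Complex.normSq (u x))
      + bmp (N⁻¹ • x) * (deriv th (N * Complex.normSq (u x)) * (N * (2 * rp (u x) (fderiv ℝ u x e)))) := by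
  obtain ⟨f', hf', hfe⟩ := nsq_fderiv (hu.differentiable one_ne_zero x)
  have h1 : HasFDerivAt (fun y : ℝ × ℝ => N⁻¹ • y) (N⁻¹ • ContinuousLinearMap.id ℝ (ℝ × ℝ)) x :=
    (hasFDerivAt_id x).const_smul N⁻¹
  have h2 : HasFDerivAt (fun y : ℝ × ℝ => bmp (N⁻¹ • y)) _ x :=
    (((bmp.contDiff (n := 1)).differentiable one_ne_zero (N⁻¹ • x)).hasFDerivAt).comp x h1
  have h3 : HasFDerivAt (fun y => th (N * Complex.normSq (u y))) _ x :=
    HasDerivAt.comp_hasFDerivAt (h₂ := th) x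
      ((th_smooth.differentiable one_ne_zero (N * Complex.normSq (u x))).hasDerivAt) (hf'.const_mul N)
  have h4 : HasFDerivAt (cutf N u) _ x := h2.mul h3
  rw [h4.fderiv]
  simp [hfe]
  ring

lemma cutf_fderiv_bound {C1 C2 : ℝ} (hC1 : ∀ s, |s * deriv th s| ≤ C1) 
    (hC2 : ∀ y, ‖fderiv ℝ (bmp : ℝ × ℝ → ℝ) y‖ ≤ C2) {N : ℝ} (hN : 1 ≤ N) {u : ℝ × ℝ → ℂ}
    (hu : ContDiff ℝ 1 u) (x e : ℝ × ℝ) (he : ‖e‖ ≤ 1) (d : ℂ)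
    (hd : rp (u x) (fderiv ℝ u x e) = rp (u x) d) :
    |fderiv ℝ (cutf N u) x e| * ‖u x‖ ≤ C2 * ‖u x‖ + 2 * C1 * ‖d‖ := by
  rw [cutf_fderiv hu, hd]
  set s := N * Complex.normSq (u x) with hs
  have b1 : |N⁻¹ * fderiv ℝ (bmp : ℝ × ℝ → ℝ) (N⁻¹ • x) e * th s| ≤ C2 := by
    rw [abs_mul, abs_mul]
    have i1 : |N⁻¹| ≤ 1 := by
      rw [abs_of_nonneg (by positivity)]; exact inv_le_one_of_one_le₀ hN
    have i2 : |fderiv ℝ (bmp : ℝ × ℝ → ℝ) (N⁻¹ • x) e| ≤ C2 :=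
      (ContinuousLinearMap.le_opNorm _ _).trans
        ((mul_le_of_le_one_right (norm_nonneg _) he).trans (hC2 _))
    have i3 : |th s| ≤ 1 := by rw [abs_of_nonneg (th_nonneg _)]; exact th_le _
    have : 0 ≤ C2 := (abs_nonneg _).trans i2
    calc _ ≤ 1 * C2 * 1 := by gcongr
      _ = C2 := by ring
  have b2 : |bmp (N⁻¹ • x) * (deriv th s * (N * (2 * rp (u x) d)))| * ‖u x‖ ≤ 2 * C1 * ‖d‖ := by
    rw [abs_mul, abs_mul, abs_mul, abs_mul]
    have i1 : |bmp (N⁻¹ • x)| ≤ 1 := by rw [abs_of_nonneg bmp.nonneg]; exact bmp.le_one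
    have i2 := rp_le (u x) d
    have i3 := hC1 s
    have i4 : |s| = |N| * ‖u x‖ ^ 2 := by
      rw [hs, Complex.normSq_eq_norm_sq, abs_mul, abs_of_nonneg (by positivity : 0 ≤ ‖u x‖^2)]
    rw [abs_mul, i4] at i3
    calc _ ≤ 1 * (|deriv th s| * (|N| * (|2| * (‖u x‖ * ‖d‖)))) * ‖u x‖ := by gcongr
      _ = 2 * (|N| * ‖u x‖ ^ 2 * |deriv th s|) * ‖d‖ := by rw [abs_two]; ring
      _ ≤ 2 * C1 * ‖d‖ := by gcongr
  calc _ ≤ (|N⁻¹ * fderiv ℝ (bmp : ℝ × ℝ → ℝ) (N⁻¹ • x) e * th s| + 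
      |bmp (N⁻¹ • x) * (deriv th s * (N * (2 * rp (u x) d)))|) * ‖u x‖ := by
        gcongr; exact abs_add_le _ _
    _ ≤ _ := by
        rw [add_mul]; gcongr

lemma mag_mul_le {A : ℝ × ℝ → ℝ × ℝ} {f : ℝ × ℝ → ℝ} {u : ℝ × ℝ → ℂ} {x : ℝ × ℝ}
    (hf : DifferentiableAt ℝ f x) (hu : DifferentiableAt ℝ u x) (h0 : 0 ≤ f x) (h1 : f x ≤ 1) 
    {a b : ℝ} 
    (k1 : |fderiv ℝ f x (1,0)| * ‖u x‖ ≤ a * ‖u x‖ + b * ‖mD1 A u x‖)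
    (k2 : |fderiv ℝ f x (0,1)| * ‖u x‖ ≤ a * ‖u x‖ + b * ‖mD2 A u x‖) :
    magGradSq A (fun y => (f y : ℂ) * u y) x ≤
      (2 + 4 * b ^ 2) * magGradSq A u x + 8 * a ^ 2 * ‖u x‖ ^ 2 := by
  rw [mag_eq, mag_eq, mD1_mul hf hu, mD2_mul hf hu]
  have key : ∀ (d : ℂ) (t : ℝ), |t| * ‖u x‖ ≤ a * ‖u x‖ + b * ‖d‖ →
      ‖(f x : ℂ) * d + (t : ℂ) * u x‖ ^ 2 ≤ (2 + 4 * b ^ 2) * ‖d‖ ^ 2 + 4 * a ^ 2 * ‖u x‖ ^ 2 := by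
    intro d t ht
    have n1 : ‖(f x : ℂ) * d + (t : ℂ) * u x‖ ≤ ‖d‖ + (a * ‖u x‖ + b * ‖d‖) := by
      refine (norm_add_le _ _).trans ?_
      rw [norm_mul, norm_mul, Complex.norm_real, Complex.norm_real, Real.norm_eq_abs, Real.norm_eq_abs,
        abs_of_nonneg h0]
      have := mul_le_of_le_one_left (norm_nonneg d) h1
      linarith
    calc _ ≤ (‖d‖ + (a * ‖u x‖ + b * ‖d‖)) ^ 2 := by gcongr
      _ ≤ _ := by nlinarith [sq_nonneg (‖d‖ - (a * ‖u x‖ + b * ‖d‖)), sq_nonneg (a * ‖u x‖ - b * ‖d‖)]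
  have := key _ _ k1
  have := key _ _ k2
  linarith

theorem truncation {U : Set (ℝ × ℝ)} (hU : IsOpen U) {A : ℝ × ℝ → ℝ × ℝ} (hA : Continuous A)
    {u : ℝ × ℝ → ℂ} (hu : ContDiff ℝ 1 u) (h0 : ∀ x ∈ frontier U, u x = 0)
    (i2 : IntegrableOn (fun x => ‖u x‖ ^ 2) U) (i4 : IntegrableOn (fun x => ‖u x‖ ^ 4) U)
    (im : IntegrableOn (magGradSq A u) U) {p q s : ℝ} (hp : 0 ≤ p) {ε : ℝ} (hε : 0 < ε) :
    ∃ v : ℝ × ℝ → ℂ, ContDiff ℝ 1 v ∧ HasCompactSupport v ∧ tsupport v ⊆ U ∧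
      ∫ x, GD p q s A v x < (∫ x in U, GD p q s A u x) + ε := by
  obtain ⟨C1, hC10, hC1⟩ := th_deriv_bound
  obtain ⟨C2, hC20, hC2⟩ := bmp_deriv_bound
  let N : ℕ → ℝ := fun n => (n : ℝ) + 1
  have hN1 : ∀ n, 1 ≤ N n := fun n => by simp [N]
  let f : ℕ → ℝ × ℝ → ℂ := fun n x => (cutf (N n) u x : ℂ) * u x
  let v : ℕ → ℝ × ℝ → ℂ := fun n => U.indicator (f n)
  have hfc : ∀ n, ContDiff ℝ 1 (f n) := fun n =>
    (Complex.ofRealCLM.contDiff.comp (cutf_contDiff (N n) hu)).mul hu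
  have hin : ∀ n, ∀ x ∈ U, v n =ᶠ[𝓝 x] f n := by
    intro n x hx
    filter_upwards [hU.mem_nhds hx] with y hy using indicator_of_mem hy _
  have hz : ∀ n x, u x = 0 → v n =ᶠ[𝓝 x] fun _ => 0 := by
    intro n x hx
    have hc : Continuous (fun y => N n * Complex.normSq (u y)) :=
      continuous_const.mul (normSq_contDiff hu).continuous
    have : ∀ᶠ y in 𝓝 x, N n * Complex.normSq (u y) < 1 :=
      hc.continuousAt.eventually_lt continuousAt_const (by simp [hx])
    filter_upwards [this] with y hy
    have : f n y = 0 := by simp [f, cutf, th_zero hy.le]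
    simp only [v]
    by_cases h : y ∈ U
    · rw [indicator_of_mem h, this]
    · rw [indicator_of_notMem h]
  have hout : ∀ n, ∀ x ∉ U, v n =ᶠ[𝓝 x] fun _ => 0 := by
    intro n x hx
    by_cases hc : x ∈ closure U
    · exact hz n x (h0 x (by rw [frontier, hU.interior_eq]; exact ⟨hc, hx⟩))
    · filter_upwards [isClosed_closure.isOpen_compl.mem_nhds hc] with y hy
      exact indicator_of_notMem (fun h => hy (subset_closure h)) _
  have hvc : ∀ n, ContDiff ℝ 1 (v n) := by
    intro n
    rw [contDiff_iff_contDiffAt]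
    intro x
    by_cases hx : x ∈ U
    · exact (hfc n).contDiffAt.congr_of_eventuallyEq (hin n x hx)
    · exact contDiffAt_const.congr_of_eventuallyEq (hout n x hx)
  have hvs : ∀ n, tsupport (v n) ⊆ U := by
    intro n x hx
    by_contra h
    exact (notMem_tsupport_iff_eventuallyEq.2 (hout n x h)) hx
  have hvk : ∀ n, HasCompactSupport (v n) := by
    intro n
    refine HasCompactSupport.intro (isCompact_closedBall (0 : ℝ × ℝ) (2 * N n)) (fun x hx => ?_)
    have hNp : 0 < N n := lt_of_lt_of_le one_pos (hN1 n)
    have : bmp ((N n)⁻¹ • x) = 0 := by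
      apply bmp.zero_of_le_dist
      simp only [Metric.mem_closedBall, dist_zero_right, not_le] at hx
      rw [dist_zero_right, norm_smul, Real.norm_eq_abs, abs_of_pos (inv_pos.2 hNp)]
      change 2 ≤ _
      rw [inv_mul_eq_div, le_div_iff₀ hNp]
      exact hx.le
    have : f n x = 0 := by simp [f, cutf, this]
    simp only [v]
    by_cases h : x ∈ U
    · rw [indicator_of_mem h, this]
    · rw [indicator_of_notMem h]
  -- domination
  let bd : ℝ × ℝ → ℝ := fun x => |p| * ((2 + 4 * (2 * C1) ^ 2) * magGradSq A u x + 8 * C2 ^ 2 * ‖u x‖ ^ 2)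
    + |q| * ‖u x‖ ^ 2 + |s| * ‖u x‖ ^ 4
  have hbdi : IntegrableOn bd U := 
    ((((im.const_mul _).add (i2.const_mul _)).const_mul _).add (i2.const_mul _)).add (i4.const_mul _)
  have hbd : ∀ n, ∀ x ∈ U, ‖GD p q s A (v n) x‖ ≤ bd x := by
    intro n x hx
    rw [GD_congr (hin n x hx), Real.norm_eq_abs]
    have hm : magGradSq A (f n) x ≤ (2 + 4 * (2 * C1) ^ 2) * magGradSq A u x + 8 * C2 ^ 2 * ‖u x‖ ^ 2 :=
      mag_mul_le ((cutf_contDiff (N n) hu).differentiable one_ne_zero x)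
        (hu.differentiable one_ne_zero x) (cutf_nonneg _ _ _) (cutf_le _ _ _)
        (cutf_fderiv_bound hC1 hC2 (hN1 n) hu x _ (by simp [Prod.norm_def]) _ (rp_mD1 A u x))
        (cutf_fderiv_bound hC1 hC2 (hN1 n) hu x _ (by simp [Prod.norm_def]) _ (rp_mD2 A u x))
    have hn : ‖f n x‖ ≤ ‖u x‖ := by
      simp only [f, norm_mul, Complex.norm_real, Real.norm_eq_abs, abs_of_nonneg (cutf_nonneg _ _ _)]
      exact mul_le_of_le_one_left (norm_nonneg _) (cutf_le _ _ _)
    have hmn := mag_nonneg A (f n) x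
    unfold GD
    calc _ ≤ |p * magGradSq A (f n) x| + |q * ‖f n x‖ ^ 2| + |s * ‖f n x‖ ^ 4| := by
          refine (abs_add_le _ _).trans ?_
          gcongr
          exact abs_sub _ _
      _ = |p| * magGradSq A (f n) x + |q| * ‖f n x‖ ^ 2 + |s| * ‖f n x‖ ^ 4 := by
          rw [abs_mul, abs_mul, abs_mul, abs_of_nonneg hmn, abs_of_nonneg (by positivity : 0 ≤ ‖f n x‖ ^ 2),
            abs_of_nonneg (by positivity : 0 ≤ ‖f n x‖ ^ 4)]
      _ ≤ bd x := by simp only [bd]; gcongr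
  classical
  let g : ℝ × ℝ → ℝ := fun x => if u x = 0 then 0 else GD p q s A u x
  have hlim : ∀ x ∈ U, Tendsto (fun n => GD p q s A (v n) x) atTop (𝓝 (g x)) := by
    intro x hx
    by_cases hux : u x = 0
    · have : ∀ n, GD p q s A (v n) x = g x := fun n => by
        rw [GD_congr (hz n x hux), GD_zero]; simp [g, hux]
      simp [this]
    · apply tendsto_const_nhds.congr'
      have hNt : Tendsto N atTop atTop := tendsto_atTop_add_const_right _ _ tendsto_natCast_atTop_atTop
      have hpos : 0 < Complex.normSq (u x) := Complex.normSq_pos.2 hux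
      filter_upwards [hNt.eventually_gt_atTop (2 / Complex.normSq (u x)), hNt.eventually_gt_atTop ‖x‖] 
        with n h2 h3
      have e1 : ∀ᶠ y in 𝓝 x, 2 < N n * Complex.normSq (u y) := by
        have hc : Continuous (fun y => N n * Complex.normSq (u y)) :=
          continuous_const.mul (normSq_contDiff hu).continuous
        exact continuousAt_const.eventually_lt hc.continuousAt ((div_lt_iff₀ hpos).1 h2)
      have e2 : ∀ᶠ y in 𝓝 x, ‖y‖ < N n := continuous_norm.continuousAt.eventually_lt continuousAt_const h3
      have : v n =ᶠ[𝓝 x] u := by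
        filter_upwards [e1, e2, hin n x hx] with y h4 h5 h6
        rw [h6]
        have hNp : 0 < N n := lt_of_lt_of_le one_pos (hN1 n)
        have : bmp ((N n)⁻¹ • y) = 1 := by
          apply bmp.one_of_mem_closedBall
          rw [Metric.mem_closedBall, dist_zero_right, norm_smul, Real.norm_eq_abs,
            abs_of_pos (inv_pos.2 hNp), inv_mul_eq_div, div_le_iff₀ hNp]
          change _ ≤ 1 * _
          linarith
        simp [f, cutf, this, th_one h4.le]
      rw [GD_congr this]; simp [g, hux]
  have hT : Tendsto (fun n => ∫ x in U, GD p q s A (v n) x) atTop (𝓝 (∫ x in U, g x)) := by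
    apply tendsto_integral_of_dominated_convergence bd
    · intro n; exact (GD_cont hA (hvc n)).aestronglyMeasurable
    · exact hbdi
    · intro n; exact (ae_restrict_iff' hU.measurableSet).2 (Eventually.of_forall (hbd n))
    · exact (ae_restrict_iff' hU.measurableSet).2 (Eventually.of_forall hlim)
  have hGi : IntegrableOn (GD p q s A u) U := 
    ((im.const_mul _).sub (i2.const_mul _)).add (i4.const_mul _)
  have hgle : ∫ x in U, g x ≤ ∫ x in U, GD p q s A u x := by
    have hgi : IntegrableOn g U := by
      have hm : MeasurableSet {x | u x ≠ 0} := (isOpen_ne_fun hu.continuous continuous_const).measurableSet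
      have : g = {x | u x ≠ 0}.indicator (GD p q s A u) := by
        ext x
        by_cases hx : u x = 0 <;> simp [g, hx, indicator]
      rw [this]
      exact hGi.indicator hm
    refine setIntegral_mono hgi hGi (fun x => ?_)
    by_cases hx : u x = 0
    · simp only [g, hx, if_true, GD]
      have := mul_nonneg hp (mag_nonneg A u x)
      simpa using this
    · simp [g, hx]
  obtain ⟨n, hn⟩ := (hT.eventually (gt_mem_nhds (show ∫ x in U, g x < (∫ x in U, GD p q s A u x) + ε by
    linarith))).exists
  refine ⟨v n, hvc n, hvk n, hvs n, ?_⟩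
  rw [← GD_setInt (hvs n)]
  exact hn


lemma fdR_compact {p : ℝ × ℝ → ℝ} (pc : HasCompactSupport p) (e : ℝ × ℝ) :
    HasCompactSupport (fun x => fderiv ℝ p x e) := pc.fderiv_apply ℝ e

lemma ibp {p q : ℝ × ℝ → ℝ} (hp : ContDiff ℝ 1 p) (hq : ContDiff ℝ 1 q) (pc : HasCompactSupport p)
    (e : ℝ × ℝ) : ∫ x, q x * fderiv ℝ p x e = - ∫ x, fderiv ℝ q x e * p x := by
  apply integral_mul_fderiv_eq_neg_fderiv_mul_of_integrable
  · exact ((fd_contR hq e).mul hp.continuous).integrable_of_hasCompactSupport pc.mul_left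
  · exact (hq.continuous.mul (fd_contR hp e)).integrable_of_hasCompactSupport (fdR_compact pc e).mul_left
  · exact (hq.continuous.mul hp.continuous).integrable_of_hasCompactSupport pc.mul_left
  · intro x _; exact hq.differentiable one_ne_zero x
  · intro x _; exact hp.differentiable one_ne_zero x

lemma jac {p q : ℝ × ℝ → ℝ} (hp : ContDiff ℝ 1 p) (hq : ContDiff ℝ 1 q) (pc : HasCompactSupport p)
    (qc : HasCompactSupport q) (e f : ℝ × ℝ) :
    ∫ x, fderiv ℝ q x f * fderiv ℝ p x e = ∫ x, fderiv ℝ p x f * fderiv ℝ q x e := by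
  obtain ⟨Cp, lp⟩ := hp.lipschitzWith_of_hasCompactSupport pc one_ne_zero
  obtain ⟨Cq, lq⟩ := hq.lipschitzWith_of_hasCompactSupport qc one_ne_zero
  have ip : Integrable (fun x => fderiv ℝ p x e) :=
    (fd_contR hp e).integrable_of_hasCompactSupport (fdR_compact pc e)
  have iq : Integrable (fun x => fderiv ℝ q x e) :=
    (fd_contR hq e).integrable_of_hasCompactSupport (fdR_compact qc e)
  have T1 := lq.integral_inv_smul_sub_mul_tendsto_integral_lineDeriv_mul (μ := volume) ip f
  have T2 := lp.integral_inv_smul_sub_mul_tendsto_integral_lineDeriv_mul (μ := volume) iq (-f)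
  have S : ∀ t : ℝ, ∫ x, (t⁻¹ • (q (x + t • f) - q x)) * fderiv ℝ p x e = 
      - ∫ x, (t⁻¹ • (p (x + t • (-f)) - p x)) * fderiv ℝ q x e := by
    intro t
    have hqs : ContDiff ℝ 1 (fun x => q (x + t • f)) := hq.comp (contDiff_id.add contDiff_const)
    have dqs : ∀ x, fderiv ℝ (fun x => q (x + t • f)) x e = fderiv ℝ q (x + t • f) e := by
      intro x; rw [fderiv_comp_add_right]
    have a1 := ibp hp hqs pc e
    have a2 := ibp hp hq pc e
    simp only [dqs] at a1
    have a3 : ∫ x, fderiv ℝ q (x + t • f) e * p x = ∫ x, fderiv ℝ q x e * p (x + t • (-f)) := by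
      rw [← integral_add_right_eq_self (fun x => fderiv ℝ q x e * p (x + t • (-f))) (t • f)]
      congr 1; ext x; simp
    have hps : Continuous (fun x => p (x + t • (-f))) := hp.continuous.comp (by fun_prop)
    have j1 : Integrable (fun x => q (x + t • f) * fderiv ℝ p x e) :=
      (hqs.continuous.mul (fd_contR hp e)).integrable_of_hasCompactSupport (fdR_compact pc e).mul_left
    have j2 : Integrable (fun x => q x * fderiv ℝ p x e) :=
      (hq.continuous.mul (fd_contR hp e)).integrable_of_hasCompactSupport (fdR_compact pc e).mul_left
    have j3 : Integrable (fun x => fderiv ℝ q x e * p (x + t • (-f))) :=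
      ((fd_contR hq e).mul hps).integrable_of_hasCompactSupport (fdR_compact qc e).mul_right
    have j4 : Integrable (fun x => fderiv ℝ q x e * p x) :=
      ((fd_contR hq e).mul hp.continuous).integrable_of_hasCompactSupport (fdR_compact qc e).mul_right
    have l : ∫ x, (t⁻¹ • (q (x + t • f) - q x)) * fderiv ℝ p x e = 
        t⁻¹ * ((∫ x, q (x + t • f) * fderiv ℝ p x e) - ∫ x, q x * fderiv ℝ p x e) := by
      rw [← integral_sub j1 j2, ← integral_const_mul]
      congr 1; ext x; simp; ring
    have r : ∫ x, (t⁻¹ • (p (x + t • (-f)) - p x)) * fderiv ℝ q x e = 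
        t⁻¹ * ((∫ x, fderiv ℝ q x e * p (x + t • (-f))) - ∫ x, fderiv ℝ q x e * p x) := by
      rw [← integral_sub j3 j4, ← integral_const_mul]
      congr 1; ext x; simp; ring
    rw [l, r, a1, a2, a3]; ring
  simp only [S] at T1
  have := tendsto_nhds_unique T1 T2.neg
  have e1 : ∀ x, lineDeriv ℝ q x f = fderiv ℝ q x f := fun x =>
    (hq.differentiable one_ne_zero x).lineDeriv_eq_fderiv
  have e2 : ∀ x, lineDeriv ℝ p x (-f) = - fderiv ℝ p x f := fun x => by
    rw [(hp.differentiable one_ne_zero x).lineDeriv_eq_fderiv, map_neg]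
  simp only [e1, e2, neg_mul, integral_neg, neg_neg] at this
  exact this

/-- the magnetic lower bound (sign `σ = ±1`) -/
lemma magnetic_ineq {v : ℝ × ℝ → ℂ} (hv : ContDiff ℝ 1 v) (vc : HasCompactSupport v) :
    ∫ x : ℝ × ℝ, x.2 * ‖v x‖ ^ 2 ≤ ∫ x, magGradSq Avan v x := by
  let p : ℝ × ℝ → ℝ := fun x => (v x).re
  let q : ℝ × ℝ → ℝ := fun x => (v x).im
  have hp : ContDiff ℝ 1 p := Complex.reCLM.contDiff.comp hv
  have hq : ContDiff ℝ 1 q := Complex.imCLM.contDiff.comp hv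
  have pc : HasCompactSupport p := vc.comp_left (g := Complex.re) rfl
  have qc : HasCompactSupport q := vc.comp_left (g := Complex.im) rfl
  have dp : ∀ x e, fderiv ℝ p x e = (fderiv ℝ v x e).re := fun x e => by
    have h : HasFDerivAt p _ x :=
      Complex.reCLM.hasFDerivAt.comp x (hv.differentiable one_ne_zero x).hasFDerivAt
    rw [h.fderiv]; rfl
  have dq : ∀ x e, fderiv ℝ q x e = (fderiv ℝ v x e).im := fun x e => by
    have h : HasFDerivAt q _ x :=
      Complex.imCLM.hasFDerivAt.comp x (hv.differentiable one_ne_zero x).hasFDerivAt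
    rw [h.fderiv]; rfl
  have J := jac hp hq pc qc (1,0) (0,1)
  -- integration by parts
  have hn : ContDiff ℝ 1 (fun y => Complex.normSq (v y)) := normSq_contDiff hv
  have nc : HasCompactSupport (fun y => Complex.normSq (v y)) :=
    vc.comp_left (g := Complex.normSq) (by simp)
  have hw : ContDiff ℝ 1 (fun y : ℝ × ℝ => y.2 ^ 2 / 2) := by fun_prop
  have dw : ∀ x : ℝ × ℝ, fderiv ℝ (fun y : ℝ × ℝ => y.2 ^ 2 / 2) x (0,1) = x.2 := fun x => by
    have h : HasFDerivAt (fun y : ℝ × ℝ => y.2) (ContinuousLinearMap.snd ℝ ℝ ℝ) x := hasFDerivAt_snd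
    have h2 := (h.pow 2).mul_const (1/2 : ℝ)
    have h3 : (fun y : ℝ × ℝ => y.2 ^ 2 / 2) = fun y => y.2 ^ 2 * (1/2) := by ext; ring
    rw [h3, h2.fderiv]; simp
  have I := ibp hn hw nc (0,1)
  simp only [dw] at I
  have dn : ∀ x, fderiv ℝ (fun y => Complex.normSq (v y)) x (0,1) = 2 * rp (v x) (fderiv ℝ v x (0,1)) :=
    fun x => by
    obtain ⟨f', h, hf⟩ := nsq_fderiv (hv.differentiable one_ne_zero x)
    rw [h.fderiv, hf]
  -- pointwise
  have pw : ∀ x, 2 * (fderiv ℝ q x (0,1) * fderiv ℝ p x (1,0)) - 2 * (fderiv ℝ p x (0,1) * fderiv ℝ q x (1,0))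
      - (x.2 ^ 2 / 2) * fderiv ℝ (fun y => Complex.normSq (v y)) x (0,1) ≤ magGradSq Avan v x := by
    intro x
    rw [dn, dp, dp, dq, dq]
    have c2 : (Avan x).2 = 0 := rfl
    have c1 : x.2 ^ 2 / 2 = - (Avan x).1 := by simp [Avan]; ring
    simp only [magGradSq, ← Complex.normSq_eq_norm_sq, Complex.normSq_apply, rp, c1, c2]
    generalize (Avan x).1 = c
    simp
    nlinarith [sq_nonneg ((fderiv ℝ v x (1,0)).re + c * (v x).im - (fderiv ℝ v x (0,1)).im),
      sq_nonneg ((fderiv ℝ v x (1,0)).im - c * (v x).re + (fderiv ℝ v x (0,1)).re)]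
  have i1 : Integrable (fun x => fderiv ℝ q x (0,1) * fderiv ℝ p x (1,0)) :=
    ((fd_contR hq _).mul (fd_contR hp _)).integrable_of_hasCompactSupport (fdR_compact pc _).mul_left
  have i2 : Integrable (fun x => fderiv ℝ p x (0,1) * fderiv ℝ q x (1,0)) :=
    ((fd_contR hp _).mul (fd_contR hq _)).integrable_of_hasCompactSupport (fdR_compact qc _).mul_left
  have i3 : Integrable (fun x : ℝ × ℝ => (x.2 ^ 2 / 2) * fderiv ℝ (fun y => Complex.normSq (v y)) x (0,1)) :=
    (hw.continuous.mul (fd_contR hn _)).integrable_of_hasCompactSupport (fdR_compact nc _).mul_left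
  have i4 : Integrable (magGradSq Avan v) :=
    (mag_cont Avan_cont hv).integrable_of_hasCompactSupport (mag_compact vc)
  have M := integral_mono (((i1.const_mul 2).sub (i2.const_mul 2)).sub i3) i4 pw
  have e1 := integral_sub ((i1.const_mul 2).sub (i2.const_mul 2)) i3
  have e2 := integral_sub (i1.const_mul 2) (i2.const_mul 2)
  simp only [Pi.sub_apply] at e1 e2 M
  rw [integral_const_mul, integral_const_mul] at e2
  rw [e1, e2, I, J] at M
  simp only [← Complex.normSq_eq_norm_sq]
  linarith


/-- reflection in the second variable -/
def rfl2 (x : ℝ × ℝ) : ℝ × ℝ := (x.1, -x.2)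

lemma rfl2_rfl2 (x : ℝ × ℝ) : rfl2 (rfl2 x) = x := by simp [rfl2]

lemma rfl2_contDiff : ContDiff ℝ 1 rfl2 := by unfold rfl2; fun_prop

lemma mag_rfl2 {v : ℝ × ℝ → ℂ} (hv : ContDiff ℝ 1 v) (x : ℝ × ℝ) :
    magGradSq Avan (v ∘ rfl2) x = magGradSq Avan v (rfl2 x) := by
  have h1 : HasFDerivAt rfl2 ((ContinuousLinearMap.fst ℝ ℝ ℝ).prod (-ContinuousLinearMap.snd ℝ ℝ ℝ)) x :=
    (hasFDerivAt_fst).prodMk (hasFDerivAt_snd.neg)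
  have h2 : HasFDerivAt (v ∘ rfl2) _ x := (hv.differentiable one_ne_zero (rfl2 x)).hasFDerivAt.comp x h1
  have e1 : fderiv ℝ (v ∘ rfl2) x (1,0) = fderiv ℝ v (rfl2 x) (1,0) := by
    rw [h2.fderiv]; simp
  have e2 : fderiv ℝ (v ∘ rfl2) x (0,1) = - fderiv ℝ v (rfl2 x) (0,1) := by
    rw [h2.fderiv, ← map_neg]; simp
  simp only [magGradSq, e1, e2, Avan, Function.comp]
  simp [rfl2]

lemma GD_rfl2 {p q s : ℝ} {v : ℝ × ℝ → ℂ} (hv : ContDiff ℝ 1 v) (x : ℝ × ℝ) :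
    GD p q s Avan (v ∘ rfl2) x = GD p q s Avan v (rfl2 x) := by
  unfold GD; rw [mag_rfl2 hv]; rfl

lemma rfl2_mp : MeasurePreserving rfl2 := by
  have := (MeasurePreserving.id (volume : Measure ℝ)).prod (Measure.measurePreserving_neg (volume : Measure ℝ))
  exact this

/-- reflection as a homeomorphism -/
def rfl2H : (ℝ × ℝ) ≃ₜ (ℝ × ℝ) where
  toFun := rfl2
  invFun := rfl2
  left_inv := rfl2_rfl2
  right_inv := rfl2_rfl2
  continuous_toFun := rfl2_contDiff.continuous
  continuous_invFun := rfl2_contDiff.continuous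

lemma int_rfl2 (f : ℝ × ℝ → ℝ) : ∫ x, f (rfl2 x) = ∫ x, f x :=
  rfl2_mp.integral_comp rfl2H.measurableEmbedding f

lemma GDint_rfl2 {p q s : ℝ} {v : ℝ × ℝ → ℂ} (hv : ContDiff ℝ 1 v) :
    ∫ x, GD p q s Avan (v ∘ rfl2) x = ∫ x, GD p q s Avan v x := by
  simp only [GD_rfl2 hv]
  exact int_rfl2 _

lemma rfl2_compact {v : ℝ × ℝ → ℂ} (vc : HasCompactSupport v) : HasCompactSupport (v ∘ rfl2) :=
  vc.comp_homeomorph rfl2H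

/-- gauge phase -/
noncomputable def gph (a : ℝ × ℝ) (t : ℝ) (x : ℝ × ℝ) : ℝ :=
  -t * (x.1 - a.1) * (x.2 - a.2) / 2 - a.2 ^ 2 * (x.1 - a.1) / 2

/-- gauge transformed and rescaled function -/
noncomputable def gau (a : ℝ × ℝ) (s : ℝ) (w : ℝ × ℝ → ℂ) (x : ℝ × ℝ) : ℂ :=
  Complex.exp (Complex.I * gph a (s ^ 2) x) * w (s • (x - a))

lemma gph_contDiff (a : ℝ × ℝ) (t : ℝ) : ContDiff ℝ 1 (gph a t) := by
  unfold gph; fun_prop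

lemma gexp_contDiff (a : ℝ × ℝ) (t : ℝ) (c : ℂ) :
    ContDiff ℝ 1 (fun x => Complex.exp (c * gph a t x)) := by
  have : ContDiff ℝ 1 (fun x => ((gph a t x : ℝ) : ℂ)) := Complex.ofRealCLM.contDiff.comp (gph_contDiff a t)
  exact (contDiff_const.mul this).cexp

lemma gau_contDiff (a : ℝ × ℝ) (s : ℝ) {w : ℝ × ℝ → ℂ} (hw : ContDiff ℝ 1 w) :
    ContDiff ℝ 1 (gau a s w) := by
  unfold gau
  refine (gexp_contDiff a _ _).mul (hw.comp ?_)
  fun_prop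

lemma gph_fderiv (a : ℝ × ℝ) (t : ℝ) (x : ℝ × ℝ) :
    fderiv ℝ (gph a t) x (1,0) = -t * (x.2 - a.2) / 2 - a.2 ^ 2 / 2 ∧
    fderiv ℝ (gph a t) x (0,1) = -t * (x.1 - a.1) / 2 := by
  have h1 : HasFDerivAt (fun y : ℝ × ℝ => y.1 - a.1) (ContinuousLinearMap.fst ℝ ℝ ℝ) x :=
    hasFDerivAt_fst.sub_const _
  have h2 : HasFDerivAt (fun y : ℝ × ℝ => y.2 - a.2) (ContinuousLinearMap.snd ℝ ℝ ℝ) x :=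
    hasFDerivAt_snd.sub_const _
  have h3 := ((h1.mul h2).const_mul (-t/2)).sub (h1.const_mul (a.2^2/2))
  have h4 : HasFDerivAt (gph a t) _ x := h3.congr_of_eventuallyEq (Eventually.of_forall (fun y => by
    simp [gph]; ring))
  rw [h4.fderiv]
  constructor <;> simp <;> ring

lemma gau_fderiv (a : ℝ × ℝ) (s : ℝ) {w : ℝ × ℝ → ℂ} (hw : ContDiff ℝ 1 w) (x e : ℝ × ℝ) :
    fderiv ℝ (gau a s w) x e = Complex.exp (Complex.I * gph a (s ^ 2) x) *
      ((s : ℂ) * fderiv ℝ w (s • (x - a)) e 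
        + Complex.I * (fderiv ℝ (gph a (s^2)) x e : ℂ) * w (s • (x - a))) := by
  have h1 : HasFDerivAt (fun y : ℝ × ℝ => s • (y - a)) (s • ContinuousLinearMap.id ℝ (ℝ × ℝ)) x :=
    ((hasFDerivAt_id x).sub_const a).const_smul s
  have h2 : HasFDerivAt (fun y => w (s • (y - a))) _ x :=
    (hw.differentiable one_ne_zero (s • (x - a))).hasFDerivAt.comp x h1
  have h3 : HasFDerivAt (fun y => ((gph a (s^2) y : ℝ) : ℂ)) _ x :=
    Complex.ofRealCLM.hasFDerivAt.comp x ((gph_contDiff a (s^2)).differentiable one_ne_zero x).hasFDerivAt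
  have h4 : HasFDerivAt (gau a s w) _ x := (h3.const_mul Complex.I).cexp.mul h2
  rw [h4.fderiv]
  simp
  ring

/-- error in the potential -/
noncomputable def gerr (a : ℝ × ℝ) (t : ℝ) (x : ℝ × ℝ) : ℝ :=
  (t - a.2) * (x.2 - a.2) - (x.2 - a.2) ^ 2 / 2

lemma gau_mD1 (a : ℝ × ℝ) (s : ℝ) {w : ℝ × ℝ → ℂ} (hw : ContDiff ℝ 1 w) (x : ℝ × ℝ) :
    mD1 Avan (gau a s w) x = Complex.exp (Complex.I * gph a (s ^ 2) x) *
      ((s : ℂ) * mD1 A₀ w (s • (x - a)) - Complex.I * (gerr a (s^2) x : ℂ) * w (s • (x - a))) := by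
  unfold mD1
  rw [gau_fderiv a s hw, (gph_fderiv a (s^2) x).1, gau]
  simp [Avan, A₀, gerr]
  ring

lemma gau_mD2 (a : ℝ × ℝ) (s : ℝ) {w : ℝ × ℝ → ℂ} (hw : ContDiff ℝ 1 w) (x : ℝ × ℝ) :
    mD2 Avan (gau a s w) x = Complex.exp (Complex.I * gph a (s ^ 2) x) *
      ((s : ℂ) * mD2 A₀ w (s • (x - a))) := by
  unfold mD2
  rw [gau_fderiv a s hw, (gph_fderiv a (s^2) x).2, gau]
  simp [Avan, A₀]
  ring

lemma norm_gexp (c : ℝ) : ‖Complex.exp (Complex.I * c)‖ = 1 := by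
  rw [mul_comm]; exact Complex.norm_exp_ofReal_mul_I c

lemma gau_norm (a : ℝ × ℝ) (s : ℝ) (w : ℝ × ℝ → ℂ) (x : ℝ × ℝ) :
    ‖gau a s w x‖ = ‖w (s • (x - a))‖ := by
  rw [gau, norm_mul, norm_gexp, one_mul]

lemma young_sq {a b c ε : ℝ} (ha : 0 ≤ a) (h : a ≤ b + c) (hε : 0 < ε) :
    a ^ 2 ≤ (1 + ε) * b ^ 2 + (1 + 1 / ε) * c ^ 2 := by
  have h1 : a ^ 2 ≤ (b + c) ^ 2 := by gcongr
  have h2 : (1 + ε) * b ^ 2 + (1 + 1 / ε) * c ^ 2 - (b + c) ^ 2 = (ε * b - c) ^ 2 / ε := by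
    field_simp; ring
  have : 0 ≤ (ε * b - c) ^ 2 / ε := by positivity
  linarith

lemma mem_Qsq_iff {a : ℝ × ℝ} {s : ℝ} (hs : 0 < s) (x : ℝ × ℝ) :
    s • (x - a) ∈ Qsq s ↔ x ∈ Metric.ball a (1/2) := by
  simp only [Qsq, mem_prod, mem_Ioo, Metric.mem_ball, Prod.dist_eq, Real.dist_eq, max_lt_iff, abs_lt,
    Prod.smul_fst, Prod.smul_snd, Prod.fst_sub, Prod.snd_sub, smul_eq_mul]
  constructor <;> rintro ⟨⟨h1, h2⟩, h3, h4⟩ <;> refine ⟨⟨?_, ?_⟩, ?_, ?_⟩ <;> nlinarith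

lemma gerr_bound {a : ℝ × ℝ} {t : ℝ} (h : |a.2 - t| ≤ 1) {x : ℝ × ℝ} (hx : x ∈ Metric.ball a (1/2)) :
    |gerr a t x| ≤ 1 := by
  simp only [Metric.mem_ball, Prod.dist_eq, Real.dist_eq, max_lt_iff] at hx
  have h2 := hx.2
  rw [abs_lt] at h2
  rw [abs_le] at h ⊢
  unfold gerr
  constructor <;> nlinarith

lemma gau_pt {a : ℝ × ℝ} {s : ℝ} (hs : 0 < s) (h : |a.2 - s^2| ≤ 1) {w : ℝ × ℝ → ℂ} (hw : ContDiff ℝ 1 w)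
    (h0 : ∀ z ∉ Qsq s, w z = 0) {ε : ℝ} (hε : 0 < ε) (x : ℝ × ℝ) :
    magGradSq Avan (gau a s w) x ≤ (1 + ε) * (s ^ 2 * magGradSq A₀ w (s • (x - a))) 
      + (1 + 1 / ε) * ‖w (s • (x - a))‖ ^ 2 ∧
    s ^ 2 * magGradSq A₀ w (s • (x - a)) ≤ (1 + ε) * magGradSq Avan (gau a s w) x
      + (1 + 1 / ε) * ‖w (s • (x - a))‖ ^ 2 := by
  have hw1 : ‖Complex.I * (gerr a (s^2) x : ℂ) * w (s • (x - a))‖ ≤ ‖w (s • (x - a))‖ := by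
    by_cases hx : s • (x - a) ∈ Qsq s
    · rw [norm_mul, norm_mul, Complex.norm_I, one_mul, Complex.norm_real, Real.norm_eq_abs]
      exact mul_le_of_le_one_left (norm_nonneg _) (gerr_bound h ((mem_Qsq_iff hs x).1 hx))
    · rw [h0 _ hx]; simp
  rw [mag_eq, mag_eq, gau_mD1 a s hw, gau_mD2 a s hw]
  simp only [norm_mul, norm_gexp, one_mul, Complex.norm_real, Real.norm_eq_abs, abs_of_pos hs]
  set X := mD1 A₀ w (s • (x - a))
  set Z := mD2 A₀ w (s • (x - a))
  set Y := Complex.I * (gerr a (s^2) x : ℂ) * w (s • (x - a))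
  have nX : ‖(s : ℂ) * X‖ = s * ‖X‖ := by
    rw [norm_mul, Complex.norm_real, Real.norm_eq_abs, abs_of_pos hs]
  have k1 : ‖(s : ℂ) * X - Y‖ ≤ s * ‖X‖ + ‖w (s • (x - a))‖ := by
    rw [← nX]; exact (norm_sub_le _ _).trans (by gcongr)
  have k2 : s * ‖X‖ ≤ ‖(s : ℂ) * X - Y‖ + ‖w (s • (x - a))‖ := by
    rw [← nX]
    calc ‖(s : ℂ) * X‖ = ‖((s : ℂ) * X - Y) + Y‖ := by ring_nf
      _ ≤ _ := (norm_add_le _ _).trans (by gcongr)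
  have y1 := young_sq (norm_nonneg _) k1 hε
  have y2 := young_sq (by positivity) k2 hε
  have y3 : 0 ≤ ε * (s * ‖Z‖) ^ 2 := by positivity
  constructor <;> nlinarith

lemma int_scale (a : ℝ × ℝ) {s : ℝ} (hs : 0 < s) (G : ℝ × ℝ → ℝ) :
    ∫ x, G (s • (x - a)) = (s ^ 2)⁻¹ * ∫ z, G z := by
  rw [integral_sub_right_eq_self (fun x => G (s • x)) a, Measure.integral_comp_smul]
  simp

lemma Qsq_open (r : ℝ) : IsOpen (Qsq r) := isOpen_Ioo.prod isOpen_Ioo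

lemma GD_scal (p q σ : ℝ) (A : ℝ × ℝ → ℝ × ℝ) (c : ℝ) {w : ℝ × ℝ → ℂ} (hw : ContDiff ℝ 1 w)
    (x : ℝ × ℝ) :
    GD p q σ A (fun y => (c : ℂ) * w y) x = GD (p * c^2) (q * c^2) (σ * c^4) A w x := by
  have := mag_mul (A := A) (f := fun _ => c) (u := w) (x := x) (differentiableAt_const _) 
    (hw.differentiable one_ne_zero x)
  unfold GD
  rw [this]
  simp only [norm_mul, Complex.norm_real, Real.norm_eq_abs, mul_pow, sq_abs]
  have : |c| ^ 4 = c ^ 4 := by rw [← abs_pow, abs_of_nonneg (by positivity)]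
  rw [this]
  simp
  ring

lemma Fsq_eq (b r : ℝ) (u : ℝ × ℝ → ℂ) : Fsq b r u = ∫ x in Qsq r, GD b 1 (1/2) A₀ u x := by
  unfold Fsq GD; congr 1; ext x; ring

lemma Qsq_sub (r : ℝ) : Qsq r ⊆ Icc (-r/2) (r/2) ×ˢ Icc (-r/2) (r/2) :=
  prod_mono Ioo_subset_Icc_self Ioo_subset_Icc_self

lemma cont_intOn_Qsq {f : ℝ × ℝ → ℝ} (hf : Continuous f) (r : ℝ) : IntegrableOn f (Qsq r) :=
  (hf.continuousOn.integrableOn_compact (isCompact_Icc.prod isCompact_Icc)).mono_set (Qsq_sub r)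

lemma Qsq_vol {r : ℝ} (hr : 0 ≤ r) : volume.real (Qsq r) = r ^ 2 := by
  rw [Qsq, Measure.volume_eq_prod, measureReal_prod_prod]
  simp [Real.volume_real_Ioo, hr]
  have : r / 2 - -r / 2 = r := by ring
  rw [this, max_eq_left hr]; ring

lemma Qsq_fin (r : ℝ) : volume (Qsq r) ≠ ⊤ :=
  ((measure_mono (Qsq_sub r)).trans_lt (isCompact_Icc.prod isCompact_Icc).measure_lt_top).ne

lemma Fsq_lower {b r : ℝ} (hb : 0 ≤ b) (hr : 0 ≤ r) {u : ℝ × ℝ → ℂ} (hu : ContDiff ℝ 1 u) :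
    -(r^2) / 2 ≤ Fsq b r u := by
  rw [Fsq_eq]
  have h : ∫ x in Qsq r, (-1/2 : ℝ) ≤ ∫ x in Qsq r, GD b 1 (1/2) A₀ u x := by
    refine setIntegral_mono (integrableOn_const (Qsq_fin r)) (cont_intOn_Qsq (GD_cont A0_cont hu) r) ?_
    intro x
    have := mul_nonneg hb (mag_nonneg A₀ u x)
    simp only [GD]
    nlinarith [sq_nonneg (‖u x‖^2 - 1)]
  rw [setIntegral_const, Qsq_vol hr] at h
  simp only [smul_eq_mul] at h
  linarith

lemma eD_bdd {b r : ℝ} (hb : 0 ≤ b) (hr : 0 ≤ r) : BddBelow (Fsq b r '' {u | MemH10sq r u}) := by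
  refine ⟨-(r^2)/2, ?_⟩
  rintro _ ⟨u, hu, rfl⟩
  exact Fsq_lower hb hr hu.1

lemma zero_mem (r : ℝ) : (fun _ => 0 : ℝ × ℝ → ℂ) ∈ {u | MemH10sq r u} := ⟨contDiff_const, fun _ _ => rfl⟩

lemma eD_nonempty (b r : ℝ) : (Fsq b r '' {u | MemH10sq r u}).Nonempty := ⟨_, _, zero_mem r, rfl⟩

lemma eD_le {b r : ℝ} (hb : 0 ≤ b) (hr : 0 ≤ r) {u : ℝ × ℝ → ℂ} (hu : MemH10sq r u) :
    eD b r ≤ Fsq b r u := csInf_le (eD_bdd hb hr) ⟨u, hu, rfl⟩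

lemma eD_nonpos {b r : ℝ} (hb : 0 ≤ b) (hr : 0 ≤ r) : eD b r ≤ 0 := by
  refine (eD_le hb hr (zero_mem r)).trans_eq ?_
  rw [Fsq_eq]; simp [GD_zero]

lemma eD_lower {b r : ℝ} (hb : 0 ≤ b) (hr : 0 ≤ r) : -(r^2)/2 ≤ eD b r := by
  refine le_csInf (eD_nonempty b r) ?_
  rintro _ ⟨u, hu, rfl⟩
  exact Fsq_lower hb hr hu.1

lemma eD_mono {b b' r : ℝ} (hb : 0 ≤ b) (hr : 0 ≤ r) (h : b ≤ b') : eD b r ≤ eD b' r := by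
  refine le_csInf (eD_nonempty b' r) ?_
  rintro _ ⟨u, hu, rfl⟩
  refine (eD_le hb hr hu).trans ?_
  rw [Fsq_eq, Fsq_eq]
  refine setIntegral_mono (cont_intOn_Qsq (GD_cont A0_cont hu.1) r) 
    (cont_intOn_Qsq (GD_cont A0_cont hu.1) r) (fun x => ?_)
  have := mul_le_mul_of_nonneg_right h (mag_nonneg A₀ u x)
  simp only [GD]; linarith


lemma tsub_compact {v : ℝ × ℝ → ℂ} {a : ℝ × ℝ} {r : ℝ} (h : tsupport v ⊆ Metric.ball a r) :
    HasCompactSupport v :=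
  (isCompact_closedBall a r).of_isClosed_subset (isClosed_tsupport v) (h.trans Metric.ball_subset_closedBall)

theorem square_upper {lam ε t δ : ℝ} {a : ℝ × ℝ} (hl : 0 < lam) (hε : 0 < ε) (hε1 : ε < 1)
    (hle : 1 + 1 / ε ≤ ε * lam) (ht : 0 < t) (ha : |a.2 - t| ≤ 1) (hδ : 0 < δ) :
    ∃ v : ℝ × ℝ → ℂ, ContDiff ℝ 1 v ∧ HasCompactSupport v ∧ tsupport v ⊆ Metric.ball a (1/2) ∧
      ∫ x, GD 1 lam (lam/2) Avan v x ≤ 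
        lam * (1-ε)^2 * (eD ((t/lam) * ((1+ε)/(1-ε))) (√t) / t) + δ := by
  set s := √t with hs
  have hs0 : 0 < s := Real.sqrt_pos.2 ht
  have hst : s ^ 2 = t := Real.sq_sqrt ht.le
  have h1e : 0 < 1 - ε := by linarith
  set b := (t/lam) * ((1+ε)/(1-ε)) with hb
  have hb0 : 0 < b := by positivity
  set η := δ * t / (2 * (lam * (1-ε)^2)) with hη
  have hη0 : 0 < η := by positivity
  obtain ⟨_, ⟨w0, hw0, rfl⟩, hw0e⟩ := exists_lt_of_csInf_lt (eD_nonempty b s) 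
    (show sInf (Fsq b s '' {u | MemH10sq s u}) < eD b s + η by unfold eD; linarith)
  have cn := hw0.1.continuous
  obtain ⟨w1, w1d, w1c, w1s, w1e⟩ := truncation (Qsq_open s) A0_cont hw0.1 hw0.2
    (cont_intOn_Qsq (by fun_prop) s) (cont_intOn_Qsq (by fun_prop) s) 
    (cont_intOn_Qsq (mag_cont A0_cont hw0.1) s) (p := b) (q := 1) (s := 1/2) hb0.le hη0
  rw [← Fsq_eq] at w1e
  set c := √(1-ε)
  have hc2 : c ^ 2 = 1 - ε := Real.sq_sqrt h1e.le
  have hc4 : c ^ 4 = (1 - ε) ^ 2 := by rw [← hc2]; ring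
  set w : ℝ × ℝ → ℂ := fun y => (c:ℂ) * w1 y with hw
  have wd : ContDiff ℝ 1 w := contDiff_const.mul w1d
  have wz : ∀ z ∉ Qsq s, w z = 0 := fun z hz => by
    have : w1 z = 0 := image_eq_zero_of_notMem_tsupport (fun h => hz (w1s h))
    simp [hw, this]
  have wts : tsupport w ⊆ Qsq s := (tsupport_mul_subset_right).trans w1s
  have vts : tsupport (gau a s w) ⊆ Metric.ball a (1/2) := by
    have h1 : tsupport (gau a s w) ⊆ (fun x => s • (x - a)) ⁻¹' (tsupport w) := by
      refine closure_minimal ?_ ((isClosed_tsupport w).preimage (by fun_prop))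
      intro x hx
      refine subset_tsupport _ ?_
      simp only [Function.mem_support, gau] at hx ⊢
      exact fun h => hx (by rw [h, mul_zero])
    intro x hx
    exact (mem_Qsq_iff hs0 x).1 (wts (h1 hx))
  have vd := gau_contDiff a s wd
  have vc := tsub_compact vts
  refine ⟨gau a s w, vd, vc, vts, ?_⟩
  have pt : ∀ x, GD 1 lam (lam/2) Avan (gau a s w) x ≤ 
      (fun z => lam * (1-ε)^2 * GD b 1 (1/2) A₀ w1 z) (s • (x - a)) := by
    intro x
    have h1 := (gau_pt hs0 (by rwa [hst]) wd wz hε x).1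
    have h2 : lam * (1-ε)^2 * GD b 1 (1/2) A₀ w1 (s • (x - a)) =
        GD ((1+ε)*t) (lam*(1-ε)) (lam/2) A₀ w (s • (x-a)) := by
      rw [hw, GD_scal _ _ _ _ _ w1d, hc2, hc4]
      simp only [GD, hb]
      field_simp
    simp only
    rw [h2]
    simp only [GD, gau_norm]
    rw [hst] at h1
    have h3 : (1 + 1/ε) * ‖w (s • (x-a))‖^2 ≤ (ε * lam) * ‖w (s • (x-a))‖^2 := by gcongr
    linarith
  have h1 := integral_mono (GD_int Avan_cont vd vc) (μ := volume) (g := fun x => (fun z => lam * (1-ε)^2 * GD b 1 (1/2) A₀ w1 z) (s • (x - a))) ?_ pt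
  · rw [int_scale a hs0 (fun z => lam * (1-ε)^2 * GD b 1 (1/2) A₀ w1 z), hst, integral_const_mul] at h1
    refine h1.trans ?_
    have h4 : ∫ x, GD b 1 (1/2) A₀ w1 x ≤ eD b s + 2 * η := by linarith
    calc _ ≤ t⁻¹ * (lam * (1-ε)^2 * (eD b s + 2 * η)) := by gcongr
      _ = _ := by rw [hη]; field_simp
  · have := ((GD_int (p := b) (q := 1) (s := 1/2) A0_cont w1d w1c).const_mul (lam * (1-ε)^2))
    have h5 := (this.comp_smul hs0.ne').comp_sub_right a
    exact h5

theorem square_lower {lam ε t μ : ℝ} {a : ℝ × ℝ} (hl : 0 < lam) (hε : 0 < ε) 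
    (hle : μ + 1 / ε ≤ (1+ε) * lam) (ht : 0 < t) (ha : |a.2 - t| ≤ 1) 
    {v : ℝ × ℝ → ℂ} (vd : ContDiff ℝ 1 v) (vts : tsupport v ⊆ Metric.ball a (1/2)) :
    lam * (1+ε)^2 * (eD ((t/lam) / (1+ε)^2) (√t) / t) ≤ ∫ x, GD 1 μ (lam/2) Avan v x := by
  set s := √t with hs
  have hs0 : 0 < s := Real.sqrt_pos.2 ht
  have hst : s ^ 2 = t := Real.sq_sqrt ht.le
  set b := (t/lam) / (1+ε)^2 with hb
  have hb0 : 0 < b := by positivity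
  have vc := tsub_compact vts
  set c := √(1+ε)
  have hc0 : 0 < c := Real.sqrt_pos.2 (by linarith)
  have hc2 : c ^ 2 = 1 + ε := Real.sq_sqrt (by linarith)
  have hc4 : c ^ 4 = (1 + ε) ^ 2 := by rw [← hc2]; ring
  set w0 : ℝ × ℝ → ℂ := fun z => ((c⁻¹ : ℝ):ℂ) * (Complex.exp (-Complex.I * gph a t (a + s⁻¹ • z)) * v (a + s⁻¹ • z)) with hw0
  set w : ℝ × ℝ → ℂ := fun y => (c:ℂ) * w0 y with hw
  have aff : ContDiff ℝ 1 (fun z : ℝ × ℝ => a + s⁻¹ • z) := by fun_prop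
  have w0d : ContDiff ℝ 1 w0 := contDiff_const.mul (((gexp_contDiff a t (-Complex.I)).comp aff).mul (vd.comp aff))
  have wd : ContDiff ℝ 1 w := contDiff_const.mul w0d
  have w0ts : tsupport w0 ⊆ Qsq s := by
    have h1 : tsupport w0 ⊆ (fun z => a + s⁻¹ • z) ⁻¹' (tsupport v) := by
      refine closure_minimal ?_ ((isClosed_tsupport v).preimage (by fun_prop))
      intro x hx
      refine subset_tsupport _ ?_
      simp only [Function.mem_support, hw0] at hx ⊢
      exact fun h => hx (by rw [h]; simp)
    intro z hz
    have := (mem_Qsq_iff (a := a) hs0 (a + s⁻¹ • z)).2 (vts (h1 hz))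
    rwa [add_sub_cancel_left, smul_inv_smul₀ hs0.ne'] at this
  have w0z : ∀ z ∉ Qsq s, w0 z = 0 := fun z hz => 
    image_eq_zero_of_notMem_tsupport (fun h => hz (w0ts h))
  have wz : ∀ z ∉ Qsq s, w z = 0 := fun z hz => by simp [hw, w0z z hz]
  have vg : v = gau a s w := by
    ext x
    simp only [gau, hw, hw0, hst, inv_smul_smul₀ hs0.ne', add_sub_cancel]
    have : (c:ℂ) ≠ 0 := by exact_mod_cast hc0.ne'
    push_cast
    rw [← mul_assoc (c:ℂ), mul_inv_cancel₀ this, one_mul, ← mul_assoc, ← Complex.exp_add]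
    simp
  have w0c : HasCompactSupport w0 := (isCompact_Icc.prod isCompact_Icc).of_isClosed_subset 
    (isClosed_tsupport _) (w0ts.trans (Qsq_sub s))
  have w0m : MemH10sq s w0 := ⟨w0d, fun z hz => w0z z (by
    have := (Qsq_open s).frontier_eq ▸ hz
    exact this.2)⟩
  have pt : ∀ x, (fun z => lam * (1+ε)^2 * GD b 1 (1/2) A₀ w0 z) (s • (x - a)) ≤
      GD 1 μ (lam/2) Avan v x := by
    intro x
    have h1 := (gau_pt hs0 (by rwa [hst]) wd wz hε x).2
    have h2 : lam * (1+ε)^2 * GD b 1 (1/2) A₀ w0 (s • (x - a)) =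
        GD (t / (1+ε)) ((1+ε)*lam) (lam/2) A₀ w (s • (x-a)) := by
      rw [hw, GD_scal _ _ _ _ _ w0d, hc2, hc4]
      simp only [GD, hb]
      field_simp
    simp only
    rw [h2, vg]
    simp only [GD, gau_norm]
    rw [hst] at h1
    have h3 : (μ + 1/ε) * ‖w (s • (x-a))‖^2 ≤ ((1+ε) * lam) * ‖w (s • (x-a))‖^2 := by gcongr
    have h4 : t / (1+ε) * magGradSq A₀ w (s • (x-a)) ≤ magGradSq Avan (gau a s w) x
        + 1/ε * ‖w (s • (x-a))‖^2 := by
      have e1 : (1 + 1/ε) = (1+ε) * (1/ε) := by field_simp; ring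
      rw [e1] at h1
      have : t / (1+ε) * magGradSq A₀ w (s • (x-a)) = (t * magGradSq A₀ w (s • (x-a))) / (1+ε) := by ring
      rw [this, div_le_iff₀ (by linarith)]
      linarith
    linarith
  have h1 := integral_mono (μ := volume) (f := fun x => (fun z => lam * (1+ε)^2 * GD b 1 (1/2) A₀ w0 z) (s • (x - a))) ?_ (GD_int Avan_cont vd vc) pt
  · rw [int_scale a hs0 (fun z => lam * (1+ε)^2 * GD b 1 (1/2) A₀ w0 z), hst, integral_const_mul] at h1
    refine le_trans ?_ h1
    have h4 := eD_le hb0.le hs0.le w0m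
    rw [Fsq_eq, GD_setInt w0ts] at h4
    calc _ = t⁻¹ * (lam * (1+ε)^2 * (eD b s)) := by field_simp
      _ ≤ _ := by gcongr
  · have := ((GD_int (p := b) (q := 1) (s := 1/2) A0_cont w0d w0c).const_mul (lam * (1+ε)^2))
    have h5 := (this.comp_smul hs0.ne').comp_sub_right a
    exact h5


/-- product with a shifted function -/
lemma conv_int {φ ψ : ℝ × ℝ → ℝ} (hφ : Continuous φ) (φc : HasCompactSupport φ) (hψ : Continuous ψ)
    (ψc : HasCompactSupport ψ) :
    Integrable (fun p : (ℝ × ℝ) × (ℝ × ℝ) => φ (p.2 - p.1) * ψ p.2) (volume.prod volume) ∧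
    ∫ x, ∫ a, φ (x - a) * ψ x = (∫ y, φ y) * ∫ x, ψ x := by
  constructor
  · have i1 : Integrable (fun y => φ (-y)) := (hφ.integrable_of_hasCompactSupport φc).comp_neg
    have i2 := hψ.integrable_of_hasCompactSupport ψc (μ := volume)
    have := Integrable.convolution_integrand (ContinuousLinearMap.mul ℝ ℝ) i2 i1
    refine this.congr (Eventually.of_forall fun p => ?_)
    simp [mul_comm]
  · have : ∀ x, ∫ a, φ (x - a) * ψ x = (∫ y, φ y) * ψ x := by
      intro x
      rw [integral_mul_const, integral_sub_left_eq_self φ volume x]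
    simp_rw [this]
    rw [integral_const_mul]

lemma shift_fd {χ : ℝ × ℝ → ℝ} (a x e : ℝ × ℝ) :
    fderiv ℝ (fun y => χ (y - a)) x e = fderiv ℝ χ (x - a) e := by
  have := fderiv_comp_add_right (𝕜 := ℝ) (f := χ) (x := x) (-a)
  simp only [← sub_eq_add_neg] at this
  rw [this]

lemma sum6 {f1 f2 f3 f4 f5 f6 : ℝ × ℝ → ℝ} (h1 : Integrable f1) (h2 : Integrable f2) (h3 : Integrable f3)
    (h4 : Integrable f4) (h5 : Integrable f5) (h6 : Integrable f6) :
    ∫ a, (f1 a + f2 a + f3 a + f4 a - f5 a + f6 a) = 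
    (∫ a, f1 a) + (∫ a, f2 a) + (∫ a, f3 a) + (∫ a, f4 a) - (∫ a, f5 a) + (∫ a, f6 a) := by
  have e1 := integral_add h1 h2
  have e2 := integral_add (h1.add h2) h3
  have e3 := integral_add ((h1.add h2).add h3) h4
  have e4 := integral_sub (((h1.add h2).add h3).add h4) h5
  have e5 := integral_add ((((h1.add h2).add h3).add h4).sub h5) h6
  simp only [Pi.add_apply, Pi.sub_apply] at e1 e2 e3 e4 e5
  rw [e5, e4, e3, e2, e1]

lemma rp_cont {f g : ℝ × ℝ → ℂ} (hf : Continuous f) (hg : Continuous g) :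
    Continuous (fun x => rp (f x) (g x)) := by
  unfold rp; fun_prop

theorem ims {χ : ℝ × ℝ → ℝ} (hχ : ContDiff ℝ 1 χ) (χc : HasCompactSupport χ) (χ0 : ∀ y, 0 ≤ χ y)
    (χ1 : ∀ y, χ y ≤ 1) {A K : ℝ} (hA : A = ∫ y, χ y ^ 2)
    (hK : K = ∫ y, ((fderiv ℝ χ y (1,0))^2 + (fderiv ℝ χ y (0,1))^2)) (hA0 : 0 < A)
    {v : ℝ × ℝ → ℂ} (vd : ContDiff ℝ 1 v) (vc : HasCompactSupport v) {lam : ℝ} (hl : 0 ≤ lam) :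
    Integrable (fun a => ∫ x, GD 1 (lam + K / A) (lam/2) Avan (fun y => (χ (y - a) : ℂ) * v y) x) ∧
    ∫ a, ∫ x, GD 1 (lam + K / A) (lam/2) Avan (fun y => (χ (y - a) : ℂ) * v y) x ≤
      A * ∫ x, GD 1 lam (lam/2) Avan v x := by
  have cχ := hχ.continuous
  have cv := vd.continuous
  have d1 := fd_contR hχ (1,0)
  have d2 := fd_contR hχ (0,1)
  have m1 := mD1_cont Avan_cont vd
  have m2 := mD2_cont Avan_cont vd
  have mm := mag_cont Avan_cont vd
  have cs1 : HasCompactSupport (fun y => χ y ^ 2) := χc.comp_left (g := fun t => t ^ 2) (by simp)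
  have cs4 : HasCompactSupport (fun y => χ y ^ 4) := χc.comp_left (g := fun t => t ^ 4) (by simp)
  have v2 : HasCompactSupport (fun x => ‖v x‖ ^ 2) := vc.comp_left (g := fun t => ‖t‖ ^ 2) (by simp)
  have v4 : HasCompactSupport (fun x => ‖v x‖ ^ 4) := vc.comp_left (g := fun t => ‖t‖ ^ 4) (by simp)
  have r1 : HasCompactSupport (fun x => rp (v x) (mD1 Avan v x)) :=
    vc.mono (fun x hx => by
      simp only [Function.mem_support] at hx ⊢
      exact fun h => hx (by simp [rp, h]))
  have r2 : HasCompactSupport (fun x => rp (v x) (mD2 Avan v x)) :=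
    vc.mono (fun x hx => by
      simp only [Function.mem_support] at hx ⊢
      exact fun h => hx (by simp [rp, h]))
  have cs2 : HasCompactSupport (fun y => χ y * fderiv ℝ χ y (1,0)) := χc.mul_right
  have cs3 : HasCompactSupport (fun y => χ y * fderiv ℝ χ y (0,1)) := χc.mul_right
  have csK : HasCompactSupport (fun y => (fderiv ℝ χ y (1,0))^2 + (fderiv ℝ χ y (0,1))^2) :=
    ((fdR_compact χc (1,0)).comp_left (g := fun t => t ^ 2) (by simp)).add
      ((fdR_compact χc (0,1)).comp_left (g := fun t => t ^ 2) (by simp))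
  have T1 := conv_int (by fun_prop) cs1 mm (mag_compact (A := Avan) vc)
  have T2 := conv_int (by fun_prop) cs2 (rp_cont cv m1) r1
  have T3 := conv_int (by fun_prop) cs3 (rp_cont cv m2) r2
  have T4 := conv_int (by fun_prop) csK (ψ := fun x => ‖v x‖ ^ 2) (by fun_prop) v2
  have T5 := conv_int (by fun_prop) cs1 (ψ := fun x => ‖v x‖ ^ 2) (by fun_prop) v2
  have T6 := conv_int (by fun_prop) cs4 (ψ := fun x => ‖v x‖ ^ 4) (by fun_prop) v4
  have z1 : ∫ y, χ y * fderiv ℝ χ y (1,0) = 0 := by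
    have := ibp hχ hχ χc (1,0)
    simp_rw [mul_comm (fderiv ℝ χ _ _)] at this
    linarith
  have z2 : ∫ y, χ y * fderiv ℝ χ y (0,1) = 0 := by
    have := ibp hχ hχ χc (0,1)
    simp_rw [mul_comm (fderiv ℝ χ _ _)] at this
    linarith
  set μ := lam + K / A with hμ
  have pt : ∀ a x, GD 1 μ (lam/2) Avan (fun y => (χ (y - a) : ℂ) * v y) x = 
      (χ (x-a)^2 * magGradSq Avan v x 
       + 2 * ((χ (x-a) * fderiv ℝ χ (x-a) (1,0)) * rp (v x) (mD1 Avan v x))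
       + 2 * ((χ (x-a) * fderiv ℝ χ (x-a) (0,1)) * rp (v x) (mD2 Avan v x))
       + ((fderiv ℝ χ (x-a) (1,0))^2 + (fderiv ℝ χ (x-a) (0,1))^2) * ‖v x‖^2)
       - μ * (χ (x-a)^2 * ‖v x‖^2) + (lam/2) * (χ (x-a)^4 * ‖v x‖^4) := by
    intro a x
    have hs : ContDiff ℝ 1 (fun y => χ (y - a)) := hχ.comp (by fun_prop)
    unfold GD
    rw [mag_mul (f := fun y => χ (y - a)) (hs.differentiable one_ne_zero x) (vd.differentiable one_ne_zero x), shift_fd, shift_fd]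
    simp only [norm_mul, Complex.norm_real, Real.norm_eq_abs, mul_pow, sq_abs]
    rw [abs_of_nonneg (χ0 (x-a))]
    ring
  have I : Integrable (fun p : (ℝ × ℝ) × (ℝ × ℝ) => GD 1 μ (lam/2) Avan (fun y => (χ (y - p.1) : ℂ) * v y) p.2)
      (volume.prod volume) := by
    simp_rw [pt]
    exact ((((T1.1.add (T2.1.const_mul 2)).add (T3.1.const_mul 2)).add T4.1).sub (T5.1.const_mul μ)).add (T6.1.const_mul (lam/2))
  refine ⟨I.integral_prod_left, ?_⟩
  rw [integral_integral_swap I]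
  have i1 : ∀ {φ : ℝ × ℝ → ℝ} (hφ : Continuous φ) (φc : HasCompactSupport φ) (c : ℝ) (x : ℝ × ℝ),
      Integrable (fun a => φ (x - a) * c) := by
    intro φ hφ φc c x
    have := (hφ.integrable_of_hasCompactSupport φc (μ := volume)).comp_sub_left x
    exact this.mul_const c
  have inner : ∀ x, ∫ a, GD 1 μ (lam/2) Avan (fun y => (χ (y - a) : ℂ) * v y) x = 
      A * magGradSq Avan v x + K * ‖v x‖^2 - μ * (A * ‖v x‖^2) + (lam/2) * ((∫ y, χ y ^ 4) * ‖v x‖^4) := by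
    intro x
    simp_rw [pt]
    have j1 := i1 (by fun_prop) cs1 (magGradSq Avan v x) x
    have j2 := (i1 (by fun_prop) cs2 (rp (v x) (mD1 Avan v x)) x).const_mul 2
    have j3 := (i1 (by fun_prop) cs3 (rp (v x) (mD2 Avan v x)) x).const_mul 2
    have j4 := i1 (by fun_prop) csK (‖v x‖^2) x
    have j5 := (i1 (by fun_prop) cs1 (‖v x‖^2) x).const_mul μ
    have j6 := (i1 (by fun_prop) cs4 (‖v x‖^4) x).const_mul (lam/2)
    rw [sum6 j1 j2 j3 j4 j5 j6]
    simp only [integral_const_mul, integral_mul_const]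
    rw [integral_sub_left_eq_self (fun y => χ y ^ 2) volume x, integral_sub_left_eq_self (fun y => χ y ^ 4) volume x,
      integral_sub_left_eq_self (fun y => χ y * fderiv ℝ χ y (1,0)) volume x,
      integral_sub_left_eq_self (fun y => χ y * fderiv ℝ χ y (0,1)) volume x,
      integral_sub_left_eq_self (fun y => (fderiv ℝ χ y (1,0))^2 + (fderiv ℝ χ y (0,1))^2) volume x,
      z1, z2, ← hA, ← hK]
    ring
  have le4 : ∫ y, χ y ^ 4 ≤ A := by
    rw [hA]
    refine integral_mono ((by fun_prop : Continuous (fun y => χ y ^ 4)).integrable_of_hasCompactSupport cs4)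
      ((by fun_prop : Continuous (fun y => χ y ^ 2)).integrable_of_hasCompactSupport cs1) (fun y => ?_)
    exact pow_le_pow_of_le_one (χ0 y) (χ1 y) (by norm_num)
  rw [← integral_const_mul]
  refine integral_mono I.integral_prod_right ((GD_int Avan_cont vd vc).const_mul A) (fun x => ?_)
  simp only
  rw [inner x]
  have : (∫ y, χ y ^ 4) * ‖v x‖^4 ≤ A * ‖v x‖^4 := by gcongr
  have h2 : μ * (A * ‖v x‖^2) = lam * (A * ‖v x‖^2) + K * ‖v x‖^2 := by rw [hμ]; field_simp
  unfold GD
  nlinarith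


/-- the local energy profile -/
noncomputable def HH (κ c : ℝ) (i : ℕ) (b : ℝ) : ℝ :=
  eD |κ * b| (√((⌊c * b⌋₊ + i : ℕ) : ℝ)) / ((⌊c * b⌋₊ + i : ℕ) : ℝ)

lemma eD_meas (r : ℝ) (hr : 0 ≤ r) : Measurable (fun b => eD |b| r) := by
  have h : Monotone (fun b => eD (max b 0) r) := fun b b' hbb => 
    eD_mono (le_max_right _ _) hr (max_le_max_right 0 hbb)
  have := h.measurable.comp (measurable_norm (α := ℝ))
  convert this using 2 with b
  simp

lemma meas_aux {P : ℕ → ℝ → ℝ} (hP : ∀ n, Measurable (P n)) {f : ℝ → ℕ} {h : ℝ → ℝ} (hf : Measurable f)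
    (hh : Measurable h) : Measurable (fun b => P (f b) (h b)) := by
  have h1 : Measurable (fun p : ℕ × ℝ => P p.1 p.2) :=
    measurable_from_prod_countable_right (fun n => hP n)
  exact h1.comp (hf.prodMk hh)

lemma floor_meas (c : ℝ) (i : ℕ) : Measurable (fun b : ℝ => ⌊c * b⌋₊ + i) :=
  (Nat.measurable_floor.comp (measurable_const_mul c)).add_const i

lemma HH_meas (κ c : ℝ) (i : ℕ) : Measurable (HH κ c i) :=
  meas_aux (P := fun n b => eD |b| (√(n:ℝ)) / (n:ℝ)) 
    (fun n => (eD_meas (√(n:ℝ)) (Real.sqrt_nonneg _)).div_const (n:ℝ)) (floor_meas c i) (measurable_const_mul κ)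

lemma HH_nonpos (κ c : ℝ) (i : ℕ) (b : ℝ) : HH κ c i b ≤ 0 :=
  div_nonpos_of_nonpos_of_nonneg (eD_nonpos (abs_nonneg _) (Real.sqrt_nonneg _)) (Nat.cast_nonneg _)

lemma HH_lower (κ c : ℝ) (i : ℕ) (b : ℝ) : -(1/2) ≤ HH κ c i b := by
  unfold HH
  rcases Nat.eq_zero_or_pos (⌊c * b⌋₊ + i) with h | h
  · rw [h]; simp
  · have h' : (0:ℝ) < ((⌊c * b⌋₊ + i : ℕ) : ℝ) := by exact_mod_cast h
    rw [le_div_iff₀ h']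
    have := eD_lower (abs_nonneg (κ * b)) (Real.sqrt_nonneg ((⌊c * b⌋₊ + i : ℕ) : ℝ))
    rw [Real.sq_sqrt h'.le] at this
    linarith

lemma HH_intOn (κ c : ℝ) (i : ℕ) {s : Set ℝ} (hs : volume s ≠ ⊤) : IntegrableOn (HH κ c i) s := by
  refine Measure.integrableOn_of_bounded (M := 1/2) hs (HH_meas κ c i).aestronglyMeasurable ?_
  refine Eventually.of_forall (fun b => ?_)
  rw [Real.norm_eq_abs, abs_le]
  exact ⟨HH_lower _ _ _ _, (HH_nonpos _ _ _ _).trans (by norm_num)⟩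

lemma far_pos {μ lam : ℝ} (hl : 0 ≤ lam) {a : ℝ × ℝ} {w : ℝ × ℝ → ℂ} (wd : ContDiff ℝ 1 w)
    (wts : tsupport w ⊆ Metric.ball a (1/2)) (ha : μ + 1/2 ≤ a.2) :
    0 ≤ ∫ x, GD 1 μ (lam/2) Avan w x := by
  have wc := tsub_compact wts
  have cw := wd.continuous
  have v2 : HasCompactSupport (fun x => ‖w x‖ ^ 2) := wc.comp_left (g := fun t => ‖t‖ ^ 2) (by simp)
  have i1 : Integrable (magGradSq Avan w) := (mag_cont Avan_cont wd).integrable_of_hasCompactSupport (mag_compact (A := Avan) wc)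
  have i2 : Integrable (fun x : ℝ × ℝ => x.2 * ‖w x‖ ^ 2) :=
    (by fun_prop : Continuous (fun x : ℝ × ℝ => x.2 * ‖w x‖ ^ 2)).integrable_of_hasCompactSupport v2.mul_left
  have h1 := magnetic_ineq wd wc
  have h2 : ∫ x, (magGradSq Avan w x - x.2 * ‖w x‖ ^ 2) ≤ ∫ x, GD 1 μ (lam/2) Avan w x := by
    refine integral_mono (i1.sub i2) (GD_int Avan_cont wd wc) (fun x => ?_)
    simp only [GD]
    have h4 : 0 ≤ lam/2 * ‖w x‖^4 := by positivity
    have h5 : μ * ‖w x‖^2 ≤ x.2 * ‖w x‖^2 := by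
      by_cases hx : x ∈ tsupport w
      · have := wts hx
        simp only [Metric.mem_ball, Prod.dist_eq, Real.dist_eq, max_lt_iff, abs_lt] at this
        have : μ ≤ x.2 := by linarith [this.2.1]
        gcongr
      · rw [image_eq_zero_of_notMem_tsupport hx]; simp
    linarith
  rw [integral_sub i1 i2] at h2
  linarith

lemma rfl2_ts {w : ℝ × ℝ → ℂ} {a : ℝ × ℝ} {r : ℝ} (wts : tsupport w ⊆ Metric.ball a r) :
    tsupport (w ∘ rfl2) ⊆ Metric.ball (rfl2 a) r := by
  have h1 : tsupport (w ∘ rfl2) ⊆ rfl2 ⁻¹' (tsupport w) := by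
    refine closure_minimal ?_ ((isClosed_tsupport w).preimage rfl2_contDiff.continuous)
    intro x hx
    exact subset_tsupport _ hx
  intro x hx
  have := wts (h1 hx)
  simp only [Metric.mem_ball, Prod.dist_eq, rfl2, Real.dist_eq] at this ⊢
  have e : |x.2 - -a.2| = |-x.2 - a.2| := by rw [← abs_neg]; congr 1; ring
  rwa [e]

lemma near_pos {μ lam ε : ℝ} (hl : 0 < lam) (hε : 0 < ε) (hle : μ + 1 / ε ≤ (1+ε) * lam)
    {a : ℝ × ℝ} {w : ℝ × ℝ → ℂ} (wd : ContDiff ℝ 1 w)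
    (wts : tsupport w ⊆ Metric.ball a (1/2)) (ha : 0 ≤ a.2) :
    lam * (1+ε)^2 * HH (1/(lam * (1+ε)^2)) 1 1 a.2 ≤ ∫ x, GD 1 μ (lam/2) Avan w x := by
  set n := ⌊a.2⌋₊ + 1 with hn
  have hnp : (0:ℝ) < n := by positivity
  have h1 : a.2 ≤ n := by rw [hn]; push_cast; exact (Nat.lt_floor_add_one a.2).le
  have h2 : (n:ℝ) ≤ a.2 + 1 := by
    have := Nat.floor_le ha
    rw [hn]; push_cast; linarith
  refine le_trans ?_ (square_lower (t := n) hl hε hle hnp (by rw [abs_le]; constructor <;> linarith) wd wts)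
  unfold HH
  rw [one_mul, ← hn]
  gcongr
  refine eD_mono (abs_nonneg _) (Real.sqrt_nonneg _) ?_
  rw [abs_of_nonneg (by positivity)]
  calc _ = (a.2 / lam) / (1+ε)^2 := by field_simp
    _ ≤ _ := by gcongr

lemma both {μ lam ε : ℝ} (hl : 0 < lam) (hε : 0 < ε) (hle : μ + 1 / ε ≤ (1+ε) * lam)
    {a : ℝ × ℝ} {w : ℝ × ℝ → ℂ} (wd : ContDiff ℝ 1 w)
    (wts : tsupport w ⊆ Metric.ball a (1/2)) :
    lam * (1+ε)^2 * HH (1/(lam * (1+ε)^2)) 1 1 |a.2| ≤ (∫ x, GD 1 μ (lam/2) Avan w x) ∧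
    (μ + 1/2 ≤ |a.2| → 0 ≤ ∫ x, GD 1 μ (lam/2) Avan w x) := by
  rcases le_total 0 a.2 with h | h
  · rw [abs_of_nonneg h]
    exact ⟨near_pos hl hε hle wd wts h, far_pos hl.le wd wts⟩
  · rw [abs_of_nonpos h]
    have wd' : ContDiff ℝ 1 (w ∘ rfl2) := wd.comp rfl2_contDiff
    rw [← GDint_rfl2 wd]
    have n1 := near_pos hl hε hle wd' (rfl2_ts wts) (by simp [rfl2, h])
    have f1 := far_pos (μ := μ) hl.le wd' (rfl2_ts wts)
    have e : (rfl2 a).2 = -a.2 := rfl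
    rw [e] at n1 f1
    exact ⟨n1, f1⟩

theorem strip_lower {χ : ℝ × ℝ → ℝ} (hχ : ContDiff ℝ 1 χ) (χc : HasCompactSupport χ) (χ0 : ∀ y, 0 ≤ χ y)
    (χ1 : ∀ y, χ y ≤ 1) (χt : tsupport χ ⊆ Metric.ball 0 (1/2)) {A K : ℝ} (hA : A = ∫ y, χ y ^ 2)
    (hK : K = ∫ y, ((fderiv ℝ χ y (1,0))^2 + (fderiv ℝ χ y (0,1))^2)) (hA0 : 0 < A)
    {lam ε R : ℝ} (hl : 0 < lam) (hε : 0 < ε) (hε1 : ε ≤ 1) (hle : lam + K/A + 1 / ε ≤ (1+ε) * lam)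
    (hR : 0 < R) {v : ℝ × ℝ → ℂ} (vd : ContDiff ℝ 1 v) (vc : HasCompactSupport v) 
    (vt : tsupport v ⊆ Strip R) :
    (R+1) * (2 * (lam^2 * (1+ε)^2 * ∫ b in (0:ℝ)..(1+2*ε), HH (1/(1+ε)^2) lam 1 b)) ≤
      A * ∫ x, GD 1 lam (lam/2) Avan v x := by
  obtain ⟨ei, ele⟩ := ims hχ χc χ0 χ1 hA hK hA0 vd vc hl.le
  refine le_trans ?_ ele
  set μ := lam + K/A with hμ
  set T := lam * (1+2*ε) with hT
  have hT0 : 0 < T := by positivity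
  set M : ℝ → ℝ := fun s => lam * (1+ε)^2 * HH (1/(lam * (1+ε)^2)) 1 1 s with hM
  have hMnp : ∀ s, M s ≤ 0 := fun s => mul_nonpos_of_nonneg_of_nonpos (by positivity) (HH_nonpos _ _ _ _)
  have hMi : IntegrableOn M (Ioo 0 T) := (HH_intOn _ _ _ (by simp)).const_mul _
  set F1 : ℝ → ℝ := (Ioo (-(R+1)/2) ((R+1)/2)).indicator (fun _ => 1)
  set F2 : ℝ → ℝ := fun s => (Iio T).indicator M |s|
  have i1 : Integrable F1 := (integrable_indicator_iff measurableSet_Ioo).2 (by simp)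
  have i2 : Integrable F2 := by
    have h1 : F2 = (Ioo (-T) T).indicator (fun s => M |s|) := by
      ext s
      by_cases hs : |s| < T
      · rw [indicator_of_mem (show s ∈ Ioo (-T) T from abs_lt.1 hs)]; exact indicator_of_mem (s := Iio T) hs _
      · rw [indicator_of_notMem (show s ∉ Ioo (-T) T from fun h => hs (abs_lt.2 h))]; exact indicator_of_notMem (s := Iio T) hs _
    rw [h1, integrable_indicator_iff measurableSet_Ioo]
    refine Integrable.const_mul ?_ _
    refine Measure.integrableOn_of_bounded (M := 1/2) (by simp) ((HH_meas _ _ _).comp measurable_norm).aestronglyMeasurable ?_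
    refine Eventually.of_forall (fun b => ?_)
    rw [Real.norm_eq_abs, abs_le]
    exact ⟨HH_lower _ _ _ _, (HH_nonpos _ _ _ _).trans (by norm_num)⟩
  have e1 : ∫ s, F1 s = R + 1 := by
    rw [integral_indicator measurableSet_Ioo]
    simp [Real.volume_real_Ioo]
    rw [max_eq_left (by linarith)]; ring
  have e2 : ∫ s, F2 s = 2 * (lam^2 * (1+ε)^2 * ∫ b in (0:ℝ)..(1+2*ε), HH (1/(1+ε)^2) lam 1 b) := by
    rw [integral_comp_abs (f := (Iio T).indicator M), integral_indicator measurableSet_Iio, Measure.restrict_restrict measurableSet_Iio]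
    have : Iio T ∩ Ioi 0 = Ioo 0 T := by ext; simp [and_comm]
    rw [this, ← integral_Ioc_eq_integral_Ioo, ← intervalIntegral.integral_of_le hT0.le]
    congr 1
    have h3 := intervalIntegral.mul_integral_comp_mul_left (f := M) (a := 0) (b := 1 + 2*ε) lam
    rw [mul_zero, ← hT] at h3
    rw [← h3]
    simp only [hM]
    rw [intervalIntegral.integral_const_mul]
    have : ∀ x, HH (1/(lam * (1+ε)^2)) 1 1 (lam * x) = HH (1/(1+ε)^2) lam 1 x := by
      intro x
      unfold HH
      rw [one_mul]
      congr 3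
      field_simp
    simp_rw [this]
    ring
  rw [← e1, ← e2, ← integral_prod_mul]
  refine integral_mono (i1.mul_prod i2) ei (fun a => ?_)
  simp only
  set w : ℝ × ℝ → ℂ := fun y => (χ (y - a) : ℂ) * v y with hw
  have wd : ContDiff ℝ 1 w := by
    have h1 : ContDiff ℝ 1 (fun y => χ (y - a)) := hχ.comp (by fun_prop)
    exact (Complex.ofRealCLM.contDiff.comp h1).mul vd
  have wts : tsupport w ⊆ Metric.ball a (1/2) := by
    have h1 : tsupport w ⊆ (fun y => y - a) ⁻¹' (tsupport χ) := by
      refine closure_minimal ?_ ((isClosed_tsupport χ).preimage (by fun_prop))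
      intro x hx
      refine subset_tsupport _ ?_
      simp only [Function.mem_support, hw] at hx ⊢
      exact fun h => hx (by rw [h]; simp)
    intro x hx
    have := χt (h1 hx)
    simpa [Metric.mem_ball, dist_eq_norm] using this
  obtain ⟨b1, b2⟩ := both hl hε hle wd wts
  by_cases h1 : a.1 ∈ Ioo (-(R+1)/2) ((R+1)/2)
  · have : F1 a.1 = 1 := indicator_of_mem h1 _
    rw [this, one_mul]
    by_cases h2 : |a.2| < T
    · have : F2 a.2 = M |a.2| := indicator_of_mem (s := Iio T) h2 _
      rw [this]; exact b1
    · have : F2 a.2 = 0 := indicator_of_notMem (s := Iio T) h2 _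
      rw [this]; refine b2 ?_
      have h3 : (1:ℝ) ≤ 1/ε := by rw [le_div_iff₀ hε]; linarith
      have h4 : 0 ≤ ε * lam := by positivity
      push Not at h2
      rw [hT] at h2
      linarith
  · have : F1 a.1 = 0 := indicator_of_notMem h1 _
    rw [this, zero_mul]
    have hw0 : w = fun _ => 0 := by
      ext x
      by_contra hx
      have hx1 : x ∈ tsupport w := subset_tsupport _ hx
      have hx2 := wts hx1
      have hx3 : v x ≠ 0 := fun h => hx (by simp [hw, h])
      have hx4 := vt (subset_tsupport _ hx3)
      simp only [Strip, mem_prod, mem_Ioo, Metric.mem_ball, Prod.dist_eq, Real.dist_eq, max_lt_iff, abs_lt] at hx2 hx4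
      refine h1 ⟨?_, ?_⟩ <;> linarith [hx2.1.1, hx2.1.2, hx4.1.1, hx4.1.2]
    rw [hw0]; simp [GD_zero]


lemma Strip_open (R : ℝ) : IsOpen (Strip R) := isOpen_Ioo.prod isOpen_univ

lemma Estrip_eq (L R : ℝ) (u : ℝ × ℝ → ℂ) :
    Estrip L R u = ∫ x in Strip R, GD 1 (L ^ (-(2:ℝ)/3)) (L ^ (-(2:ℝ)/3) / 2) Avan u x := by
  unfold Estrip GD stripDensity
  simp

lemma strip_zero_mem (R : ℝ) : MemH1mag0 R (fun _ => 0) := by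
  refine ⟨contDiff_const, ?_, ?_, ?_, fun _ _ => rfl⟩
  · simp
  · have : magGradSq Avan (fun _ => 0) = fun _ => 0 := by ext x; exact mag_zero _ x
    rw [this]; simp
  · simp

theorem egs_lower {χ : ℝ × ℝ → ℝ} (hχ : ContDiff ℝ 1 χ) (χc : HasCompactSupport χ) (χ0 : ∀ y, 0 ≤ χ y)
    (χ1 : ∀ y, χ y ≤ 1) (χt : tsupport χ ⊆ Metric.ball 0 (1/2)) {A K : ℝ} (hA : A = ∫ y, χ y ^ 2)
    (hK : K = ∫ y, ((fderiv ℝ χ y (1,0))^2 + (fderiv ℝ χ y (0,1))^2)) (hA0 : 0 < A)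
    {L lam ε R : ℝ} (hL : lam = L ^ (-(2:ℝ)/3)) (hl : 0 < lam) (hε : 0 < ε) (hε1 : ε ≤ 1) (hle : lam + K/A + 1 / ε ≤ (1+ε) * lam)
    (hR : 0 < R) :
    BddBelow (Estrip L R '' {u | MemH1mag0 R u}) ∧
    (R+1) * (2 * (lam^2 * (1+ε)^2 * ∫ b in (0:ℝ)..(1+2*ε), HH (1/(1+ε)^2) lam 1 b)) / A ≤ egs L R := by
  have key : ∀ u, MemH1mag0 R u → (R+1) * (2 * (lam^2 * (1+ε)^2 * ∫ b in (0:ℝ)..(1+2*ε), HH (1/(1+ε)^2) lam 1 b)) / A ≤ Estrip L R u := by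
    rintro u ⟨ud, i2, im, i4, u0⟩
    refine le_of_forall_pos_le_add (fun η hη => ?_)
    obtain ⟨v, vd, vc, vt, vl⟩ := truncation (Strip_open R) Avan_cont ud u0 i2 i4 im (p := 1) (q := lam) (s := lam/2)
      zero_le_one hη
    have h1 := strip_lower hχ χc χ0 χ1 χt hA hK hA0 hl hε hε1 hle hR vd vc vt
    rw [Estrip_eq, ← hL, div_le_iff₀ hA0]
    refine h1.trans ?_
    rw [mul_comm]
    gcongr
  constructor
  · refine ⟨(R+1) * (2 * (lam^2 * (1+ε)^2 * ∫ b in (0:ℝ)..(1+2*ε), HH (1/(1+ε)^2) lam 1 b)) / A, ?_⟩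
    rintro _ ⟨u, hu, rfl⟩
    exact key u hu
  · refine le_csInf ⟨_, _, strip_zero_mem R, rfl⟩ ?_
    rintro _ ⟨u, hu, rfl⟩
    exact key u hu

theorem E_lower {χ : ℝ × ℝ → ℝ} (hχ : ContDiff ℝ 1 χ) (χc : HasCompactSupport χ) (χ0 : ∀ y, 0 ≤ χ y)
    (χ1 : ∀ y, χ y ≤ 1) (χt : tsupport χ ⊆ Metric.ball 0 (1/2)) {A K : ℝ} (hA : A = ∫ y, χ y ^ 2)
    (hK : K = ∫ y, ((fderiv ℝ χ y (1,0))^2 + (fderiv ℝ χ y (0,1))^2)) (hA0 : 0 < A)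
    {L lam ε : ℝ} (hL : lam = L ^ (-(2:ℝ)/3)) (hl : 0 < lam) (hε : 0 < ε) (hε1 : ε ≤ 1) (hle : lam + K/A + 1 / ε ≤ (1+ε) * lam)
    {EL : ℝ} (hE : Tendsto (fun R => egs L R / R) atTop (𝓝 EL)) :
    2 * (lam^2 * (1+ε)^2 * ∫ b in (0:ℝ)..(1+2*ε), HH (1/(1+ε)^2) lam 1 b) / A ≤ EL := by
  set C := 2 * (lam^2 * (1+ε)^2 * ∫ b in (0:ℝ)..(1+2*ε), HH (1/(1+ε)^2) lam 1 b)
  have h1 : Tendsto (fun R : ℝ => (1 + R⁻¹) * (C / A)) atTop (𝓝 ((1 + 0) * (C / A))) :=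
    (tendsto_const_nhds.add tendsto_inv_atTop_zero).mul_const _
  have h2 : (1 + 0) * (C / A) ≤ EL := by
    refine le_of_tendsto_of_tendsto h1 hE ?_
    filter_upwards [eventually_gt_atTop 0] with R hR
    have := (egs_lower hχ χc χ0 χ1 χt hA hK hA0 hL hl hε hε1 hle hR).2
    rw [le_div_iff₀ hR]
    refine le_trans (le_of_eq ?_) this
    change _ = (R + 1) * C / A
    field_simp
  linarith

lemma GD_sum {ι : Type*} {p q σ : ℝ} {A : ℝ × ℝ → ℝ × ℝ} (s : Finset ι) (f : ι → ℝ × ℝ → ℂ)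
    (hd : ∀ i ∈ s, ∀ j ∈ s, i ≠ j → Disjoint (tsupport (f i)) (tsupport (f j))) (x : ℝ × ℝ) :
    GD p q σ A (fun y => ∑ i ∈ s, f i y) x = ∑ i ∈ s, GD p q σ A (f i) x := by
  have off : ∀ j, x ∉ tsupport (f j) → ∀ᶠ y in 𝓝 x, f j y = 0 := by
    intro j hj
    filter_upwards [(isClosed_tsupport (f j)).isOpen_compl.mem_nhds hj] with y hy
    exact image_eq_zero_of_notMem_tsupport hy
  by_cases h : ∃ i ∈ s, x ∈ tsupport (f i)
  · obtain ⟨i, hi, hx⟩ := h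
    have hn : ∀ j ∈ s, j ≠ i → x ∉ tsupport (f j) := fun j hj hji hxj =>
      (Set.disjoint_left.1 (hd j hj i hi hji)) hxj hx
    rw [Finset.sum_eq_single_of_mem i hi (fun j hj hji => GD_off (hn j hj hji))]
    refine GD_congr ?_
    have : ∀ᶠ y in 𝓝 x, ∀ j ∈ s, j ≠ i → f j y = 0 := by
      rw [Filter.eventually_all_finset]
      intro j hj
      by_cases hji : j = i
      · exact Eventually.of_forall (fun y h => absurd hji h)
      · filter_upwards [off j (hn j hj hji)] with y hy _ using hy
    filter_upwards [this] with y hy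
    exact Finset.sum_eq_single_of_mem i hi hy
  · push Not at h
    rw [Finset.sum_eq_zero (fun j hj => GD_off (h j hj)), ← GD_zero p q σ A x]
    refine GD_congr ?_
    have : ∀ᶠ y in 𝓝 x, ∀ j ∈ s, f j y = 0 := by
      rw [Filter.eventually_all_finset]
      intro j hj
      exact off j (h j hj)
    filter_upwards [this] with y hy
    exact Finset.sum_eq_zero hy

/-- centers of the squares -/
noncomputable def ctr (N : ℕ) (i : ℕ × ℕ × Bool) : ℝ × ℝ :=
  ((i.1 : ℝ) + 1/2 - N/2, if i.2.2 then (i.2.1 : ℝ) + 1/2 else -((i.2.1 : ℝ) + 1/2))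

lemma nat_dist {m n : ℕ} (h : m ≠ n) : (1:ℝ) ≤ |(m:ℝ) - n| := by
  rcases lt_or_gt_of_ne h with h | h
  · have : (m:ℝ) + 1 ≤ n := by exact_mod_cast h
    rw [abs_of_nonpos] <;> linarith
  · have : (n:ℝ) + 1 ≤ m := by exact_mod_cast h
    rw [abs_of_nonneg] <;> linarith

lemma ctr_dist (N : ℕ) {i j : ℕ × ℕ × Bool} (h : i ≠ j) : 1 ≤ dist (ctr N i) (ctr N j) := by
  obtain ⟨i1, i2, i3⟩ := i
  obtain ⟨j1, j2, j3⟩ := j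
  simp only [Prod.dist_eq, Real.dist_eq, le_max_iff, ctr]
  by_cases h1 : i1 = j1
  · right
    by_cases h3 : i3 = j3
    · have h2 : i2 ≠ j2 := fun h2 => h (by rw [h1, h2, h3])
      have := nat_dist h2
      subst h3
      cases i3
      · simp only [Bool.false_eq_true, if_false]
        have e : -((i2:ℝ) + 1/2) - -((j2:ℝ) + 1/2) = -((i2:ℝ) - j2) := by ring
        rw [e, abs_neg]; exact this
      · simp only [if_true]
        have e : ((i2:ℝ) + 1/2) - ((j2:ℝ) + 1/2) = ((i2:ℝ) - j2) := by ring
        rw [e]; exact this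
    · have p1 : (0:ℝ) ≤ i2 := Nat.cast_nonneg _
      have p2 : (0:ℝ) ≤ j2 := Nat.cast_nonneg _
      cases i3 <;> cases j3 <;> simp at h3 ⊢
      · rw [abs_of_nonpos] <;> linarith
      · rw [abs_of_nonneg] <;> linarith
  · left
    have := nat_dist h1
    have e : ((i1:ℝ) + 1/2 - N/2) - ((j1:ℝ) + 1/2 - N/2) = ((i1:ℝ) - j1) := by ring
    rw [e]; exact this

theorem egs_upper {L lam ε : ℝ} (hL : lam = L ^ (-(2:ℝ)/3)) (hl : 0 < lam) (hε : 0 < ε) (hε1 : ε < 1)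
    (hle : 1 + 1 / ε ≤ ε * lam) {N M : ℕ} (bdd : BddBelow (Estrip L N '' {u | MemH1mag0 N u})) :
    egs L N ≤ N * (2 * ∑ k ∈ Finset.range M, lam * (1-ε)^2 * (eD (((k:ℝ)/lam) * ((1+ε)/(1-ε))) (√(k:ℝ)) / k)) := by
  refine le_of_forall_pos_le_add (fun η hη => ?_)
  set δ := η / (N * (2 * M) + 1) with hδ
  have hδ0 : 0 < δ := by positivity
  set e : ℕ → ℝ := fun k => lam * (1-ε)^2 * (eD (((k:ℝ)/lam) * ((1+ε)/(1-ε))) (√(k:ℝ)) / k) with he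
  have ex : ∀ j k : ℕ, ∃ v : ℝ × ℝ → ℂ, ContDiff ℝ 1 v ∧ HasCompactSupport v ∧ tsupport v ⊆ Metric.ball (ctr N (j,k,true)) (1/2) ∧
      ∫ x, GD 1 lam (lam/2) Avan v x ≤ e k + δ := by
    intro j k
    rcases Nat.eq_zero_or_pos k with hk | hk
    · refine ⟨fun _ => 0, contDiff_const, ?_, ?_, ?_⟩
      · exact HasCompactSupport.zero
      · have : tsupport (fun _ : ℝ × ℝ => (0:ℂ)) = ∅ := by
          rw [tsupport_eq_empty_iff]; rfl
        rw [this]; exact empty_subset _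
      · simp only [GD_zero, he, hk]; simp; exact hδ0.le
    · refine square_upper hl hε hε1 hle (by exact_mod_cast hk) ?_ hδ0
      simp [ctr]; try norm_num
  choose v vd vc vt ve using ex
  set f : ℕ × ℕ × Bool → ℝ × ℝ → ℂ := fun i => if i.2.2 then v i.1 i.2.1 else v i.1 i.2.1 ∘ rfl2 with hf
  have fd : ∀ i, ContDiff ℝ 1 (f i) := by
    rintro ⟨j, k, b⟩
    cases b
    · simpa [hf] using (vd j k).comp rfl2_contDiff
    · simpa [hf] using vd j k
  have ft : ∀ i, tsupport (f i) ⊆ Metric.ball (ctr N i) (1/2) := by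
    rintro ⟨j, k, b⟩
    cases b
    · simpa [hf, ctr, rfl2] using rfl2_ts (vt j k)
    · simpa [hf] using vt j k
  have fc : ∀ i, HasCompactSupport (f i) := fun i => tsub_compact (ft i)
  have fe : ∀ i, ∫ x, GD 1 lam (lam/2) Avan (f i) x ≤ e i.2.1 + δ := by
    rintro ⟨j, k, b⟩
    cases b
    · simp only [hf, Bool.false_eq_true, if_false]
      rw [GDint_rfl2 (vd j k)]; exact ve j k
    · simp only [hf, if_true]; exact ve j k
  set s : Finset (ℕ × ℕ × Bool) := Finset.range N ×ˢ (Finset.range M ×ˢ Finset.univ) with hs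
  set F : ℝ × ℝ → ℂ := fun y => ∑ i ∈ s, f i y with hF
  have Fd : ContDiff ℝ 1 F := ContDiff.sum (fun i _ => fd i)
  have Ft : tsupport F ⊆ ⋃ i ∈ s, tsupport (f i) := by
    refine closure_minimal ?_ (s.finite_toSet.isClosed_biUnion (fun i _ => isClosed_tsupport _))
    intro x hx
    obtain ⟨i, hi, hx⟩ := Finset.exists_ne_zero_of_sum_ne_zero hx
    exact mem_biUnion hi (subset_tsupport _ hx)
  have Fc : HasCompactSupport F := 
    (s.finite_toSet.isCompact_biUnion (fun i _ => fc i)).of_isClosed_subset (isClosed_tsupport _) Ft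
  have FS : tsupport F ⊆ Strip N := by
    refine Ft.trans (iUnion₂_subset (fun i hi => (ft i).trans ?_))
    intro x hx
    have hi1 : i.1 < N := by
      simp only [hs, Finset.mem_product, Finset.mem_range] at hi; exact hi.1
    have hi2 : (i.1:ℝ) + 1 ≤ N := by exact_mod_cast hi1
    have hi3 : (0:ℝ) ≤ i.1 := Nat.cast_nonneg _
    simp only [ctr, Metric.mem_ball, Prod.dist_eq, Real.dist_eq, max_lt_iff, abs_lt] at hx
    refine ⟨⟨?_, ?_⟩, mem_univ _⟩ <;> linarith [hx.1.1, hx.1.2]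
  have Fm : MemH1mag0 N F := by
    have cF := Fd.continuous
    refine ⟨Fd, ?_, ?_, ?_, ?_⟩
    · exact ((by fun_prop : Continuous (fun x => ‖F x‖^2)).integrable_of_hasCompactSupport
        (Fc.comp_left (g := fun t => ‖t‖ ^ 2) (by simp))).integrableOn
    · exact ((mag_cont Avan_cont Fd).integrable_of_hasCompactSupport (mag_compact Fc)).integrableOn
    · exact ((by fun_prop : Continuous (fun x => ‖F x‖^4)).integrable_of_hasCompactSupport
        (Fc.comp_left (g := fun t => ‖t‖ ^ 4) (by simp))).integrableOn
    · intro x hx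
      rw [(Strip_open N).frontier_eq] at hx
      exact image_eq_zero_of_notMem_tsupport (fun h => hx.2 (FS h))
  have h1 : egs L N ≤ Estrip L N F := csInf_le bdd ⟨F, Fm, rfl⟩
  rw [Estrip_eq, ← hL, GD_setInt FS] at h1
  refine h1.trans ?_
  have hd : ∀ i ∈ s, ∀ j ∈ s, i ≠ j → Disjoint (tsupport (f i)) (tsupport (f j)) := fun i _ j _ hij =>
    (Metric.ball_disjoint_ball (by linarith [ctr_dist N hij])).mono (ft i) (ft j)
  simp_rw [hF, GD_sum s f hd]
  rw [integral_finsetSum s (fun i _ => GD_int Avan_cont (fd i) (fc i))]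
  calc _ ≤ ∑ i ∈ s, (e i.2.1 + δ) := Finset.sum_le_sum (fun i _ => fe i)
    _ = N * (2 * ∑ k ∈ Finset.range M, (e k + δ)) := by
        rw [hs, Finset.sum_product]
        simp only [Finset.sum_product]
        simp [Finset.mul_sum]
        exact Finset.sum_congr rfl (fun i _ => by ring)
    _ = N * (2 * ∑ k ∈ Finset.range M, e k) + N * (2 * M) * δ := by
        rw [Finset.sum_add_distrib]; simp; ring
    _ ≤ _ := by
        have : N * (2 * M) * δ ≤ η := by
          rw [hδ, mul_div_assoc', div_le_iff₀ (by positivity)]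
          nlinarith
        linarith

theorem E_upper {L lam ε : ℝ} (hL : lam = L ^ (-(2:ℝ)/3)) (hl : 0 < lam) (hε : 0 < ε) (hε1 : ε < 1)
    (hle : 1 + 1 / ε ≤ ε * lam) (bdd : ∀ R > 0, BddBelow (Estrip L R '' {u | MemH1mag0 R u})) 
    {EL : ℝ} (hE : Tendsto (fun R => egs L R / R) atTop (𝓝 EL)) :
    EL ≤ 2 * (lam^2 * (1-ε)^2 * ∫ b in (0:ℝ)..1, HH ((1+ε)/(1-ε)) lam 0 b) := by
  set M := ⌊lam⌋₊ + 1 with hM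
  have h1e : 0 < 1 - ε := by linarith
  have h1 : EL ≤ 2 * ∑ k ∈ Finset.range M, lam * (1-ε)^2 * (eD (((k:ℝ)/lam) * ((1+ε)/(1-ε))) (√(k:ℝ)) / k) := by
    refine le_of_tendsto (hE.comp tendsto_natCast_atTop_atTop) ?_
    filter_upwards [eventually_gt_atTop 0] with N hN
    have hN' : (0:ℝ) < N := by exact_mod_cast hN
    simp only [Function.comp]
    rw [div_le_iff₀ hN', mul_comm _ (N:ℝ)]
    exact egs_upper hL hl hε hε1 hle (bdd N hN')
  refine h1.trans ?_
  rw [← Finset.mul_sum]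
  set G : ℝ → ℝ := HH ((1+ε)/(1-ε)/lam) 1 0 with hG
  have Gi : ∀ a b, IntervalIntegrable G volume a b := fun a b => 
    ⟨HH_intOn _ _ _ (by simp), HH_intOn _ _ _ (by simp)⟩
  have h2 : ∀ k : ℕ, eD (((k:ℝ)/lam) * ((1+ε)/(1-ε))) (√(k:ℝ)) / k ≤ ∫ s in (k:ℝ)..((k+1:ℕ):ℝ), G s := by
    intro k
    set c := eD (((k:ℝ)/lam) * ((1+ε)/(1-ε))) (√(k:ℝ)) / k with hc
    have : ∫ s in (k:ℝ)..((k+1:ℕ):ℝ), c = c := by simp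
    rw [← this]
    refine intervalIntegral.integral_mono_on_of_le_Ioo (by simp) (by simp) (Gi _ _) (fun s hs => ?_)
    have hk : (0:ℝ) ≤ k := Nat.cast_nonneg _
    have fl : ⌊s⌋₊ = k := by
      rw [Nat.floor_eq_iff (hk.trans hs.1.le)]
      exact ⟨hs.1.le, by have := hs.2; push_cast at this; exact this⟩
    have hs0 : 0 ≤ s := hk.trans hs.1.le
    simp only [hG, HH, one_mul, fl, add_zero, hc]
    gcongr
    refine eD_mono (by positivity) (Real.sqrt_nonneg _) ?_
    rw [abs_of_nonneg (by positivity)]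
    calc _ ≤ (s / lam) * ((1+ε)/(1-ε)) := by gcongr; exact hs.1.le
      _ = _ := by ring
  have h3 : ∑ k ∈ Finset.range M, eD (((k:ℝ)/lam) * ((1+ε)/(1-ε))) (√(k:ℝ)) / k ≤ ∫ s in (0:ℝ)..M, G s := by
    have := intervalIntegral.sum_integral_adjacent_intervals (a := fun k : ℕ => (k:ℝ)) (f := G) (μ := volume) (n := M)
      (fun k _ => Gi _ _)
    simp only [Nat.cast_zero] at this
    rw [← this]
    exact Finset.sum_le_sum (fun k _ => h2 k)
  have h4 : ∫ s in (0:ℝ)..M, G s ≤ ∫ s in (0:ℝ)..lam, G s := by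
    rw [← intervalIntegral.integral_add_adjacent_intervals (Gi 0 lam) (Gi lam M)]
    have hlM : lam ≤ M := by rw [hM]; push_cast; exact (Nat.lt_floor_add_one lam).le
    have : ∫ s in lam..M, G s ≤ 0 := by
      have := intervalIntegral.integral_mono_on hlM (Gi lam M) (by simp : IntervalIntegrable (fun _ => (0:ℝ)) volume lam M) (fun s _ => HH_nonpos _ _ _ s)
      simpa using this
    linarith
  have h5 : ∫ s in (0:ℝ)..lam, G s = lam * ∫ b in (0:ℝ)..1, HH ((1+ε)/(1-ε)) lam 0 b := by
    have h3 := intervalIntegral.mul_integral_comp_mul_left (f := G) (a := 0) (b := 1) lam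
    rw [mul_zero, mul_one] at h3
    rw [← h3]
    congr 1
    refine intervalIntegral.integral_congr (fun x _ => ?_)
    simp only [hG, HH, one_mul]
    congr 3
    field_simp
  calc _ ≤ 2 * (lam * (1-ε)^2 * ∫ s in (0:ℝ)..lam, G s) := by gcongr; exact h3.trans h4
    _ = _ := by rw [h5]; ring


lemma HH_abs (κ c : ℝ) (i : ℕ) (b : ℝ) : ‖HH κ c i b‖ ≤ 1/2 := by
  rw [Real.norm_eq_abs, abs_le]
  exact ⟨HH_lower _ _ _ _, (HH_nonpos _ _ _ _).trans (by norm_num)⟩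

lemma HH_tendsto {g : ℝ → ℝ} (hg : IsLimitG g) {κ : ℝ} (hκ : 0 < κ) (i : ℕ) {b : ℝ} (hb : 0 < b) :
    Tendsto (fun c => HH κ c i b) atTop (𝓝 (g (κ * b))) := by
  have h1 := hg (κ * b) (by positivity)
  have h2 : Tendsto (fun c : ℝ => ((⌊c * b⌋₊ + i : ℕ) : ℝ)) atTop atTop := by
    refine tendsto_natCast_atTop_atTop.comp ?_
    exact tendsto_atTop_mono (fun c => Nat.le_add_right _ i)
      (tendsto_nat_floor_atTop.comp (tendsto_id.atTop_mul_const hb))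
  have h3 := h1.comp (Real.tendsto_sqrt_atTop.comp h2)
  refine h3.congr (fun c => ?_)
  simp only [Function.comp, HH]
  rw [Real.sq_sqrt (Nat.cast_nonneg _), abs_of_pos (by positivity)]

lemma HH_int_tendsto {g : ℝ → ℝ} (hg : IsLimitG g) {κ : ℝ} (hκ : 0 < κ) (i : ℕ) {T : ℝ} (hT : 0 < T) :
    Tendsto (fun c => ∫ b in (0:ℝ)..T, HH κ c i b) atTop (𝓝 (∫ b in (0:ℝ)..T, g (κ * b))) := by
  refine intervalIntegral.tendsto_integral_filter_of_dominated_convergence (fun _ => 1/2) ?_ ?_ ?_ ?_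
  · exact Eventually.of_forall (fun c => (HH_meas κ c i).aestronglyMeasurable)
  · exact Eventually.of_forall (fun c => Eventually.of_forall (fun b _ => HH_abs κ c i b))
  · simp
  · refine Eventually.of_forall (fun b hb => ?_)
    rw [uIoc_of_le hT.le] at hb
    exact HH_tendsto hg hκ i hb.1

lemma g_nonpos {g : ℝ → ℝ} (hg : IsLimitG g) {b : ℝ} (hb : 0 < b) : g b ≤ 0 := by
  have := HH_tendsto hg one_pos 1 hb
  rw [one_mul] at this
  exact le_of_tendsto this (Eventually.of_forall (fun c => HH_nonpos _ _ _ _))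

lemma g_int {g : ℝ → ℝ} (hg : IsLimitG g) {s : Set ℝ} (hs : MeasurableSet s) (hv : volume s ≠ ⊤) 
    (h0 : ∀ b ∈ s, 0 < b) : IntegrableOn g s := by
  have ht : ∀ b, 0 < b → Tendsto (fun n : ℕ => HH 1 (n:ℝ) 1 b) atTop (𝓝 (g b)) := fun b hb => by
    have := HH_tendsto hg one_pos 1 hb
    rw [one_mul] at this
    exact this.comp tendsto_natCast_atTop_atTop
  haveI : IsFiniteMeasure (volume.restrict s) := ⟨by simpa using hv.lt_top⟩
  refine Integrable.of_bound (C := 1/2) ?_ ?_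
  · refine aestronglyMeasurable_of_tendsto_ae atTop (f := fun n : ℕ => HH 1 (n:ℝ) 1) 
      (fun n => (HH_meas _ _ _).aestronglyMeasurable) ?_
    rw [ae_restrict_iff' hs]
    exact Eventually.of_forall (fun b hb => ht b (h0 b hb))
  · rw [ae_restrict_iff' hs]
    exact Eventually.of_forall (fun b hb => le_of_tendsto (ht b (h0 b hb)).norm 
      (Eventually.of_forall (fun n => HH_abs _ _ _ _)))

lemma g_ii {g : ℝ → ℝ} (hg : IsLimitG g) {x y : ℝ} (hx : 0 ≤ x) (hy : x ≤ y) :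
    IntervalIntegrable g volume x y := by
  rw [intervalIntegrable_iff_integrableOn_Ioc_of_le hy]
  exact g_int hg measurableSet_Ioc (by simp) (fun b hb => hx.trans_lt hb.1)

lemma g_anti {g : ℝ → ℝ} (hg : IsLimitG g) {x y : ℝ} (hx : 0 ≤ x) (hy : x ≤ y) :
    ∫ b in (0:ℝ)..y, g b ≤ ∫ b in (0:ℝ)..x, g b := by
  rw [← intervalIntegral.integral_add_adjacent_intervals (g_ii hg le_rfl hx) (g_ii hg hx hy)]
  have : ∫ b in x..y, g b ≤ 0 := by
    rw [intervalIntegral.integral_of_le hy]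
    refine setIntegral_nonpos measurableSet_Ioc (fun b hb => g_nonpos hg (hx.trans_lt hb.1))
  linarith

lemma sq_integrable_aux {χ : ℝ × ℝ → ℝ} (hc : Continuous χ) (cs : HasCompactSupport χ) :
    Integrable (fun y => χ y ^ 2) := by
  have c2 : HasCompactSupport (fun y => χ y ^ 2) := HasCompactSupport.comp_left (g := fun t : ℝ => t^2) cs (by simp)
  exact (hc.pow 2).integrable_of_hasCompactSupport c2

lemma exists_chi {ε : ℝ} (hε : 0 < ε) (hε1 : ε < 1) : ∃ χ : ℝ × ℝ → ℝ, ContDiff ℝ 1 χ ∧ HasCompactSupport χ ∧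
    (∀ y, 0 ≤ χ y) ∧ (∀ y, χ y ≤ 1) ∧ tsupport χ ⊆ Metric.ball 0 (1/2) ∧ (1-ε)^2 ≤ ∫ y, χ y ^ 2 := by
  let f : ContDiffBump (0 : ℝ × ℝ) := ⟨(1-ε)/2, 1/2 - ε/4, by linarith, by linarith⟩
  refine ⟨f, f.contDiff, f.hasCompactSupport, fun y => f.nonneg, fun y => f.le_one, ?_, ?_⟩
  · rw [f.tsupport_eq]
    exact Metric.closedBall_subset_ball (by change 1/2 - ε/4 < 1/2; linarith)
  · have hi : Integrable (fun y => f y ^ 2) :=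
      sq_integrable_aux f.continuous f.hasCompactSupport
    have h1 : ∫ y in Metric.closedBall (0 : ℝ × ℝ) ((1-ε)/2), f y ^ 2 ≤ ∫ y, f y ^ 2 :=
      setIntegral_le_integral hi (Eventually.of_forall (fun y => sq_nonneg _))
    refine le_trans (le_of_eq ?_) h1
    rw [setIntegral_congr_fun (g := fun _ => (1:ℝ)) Metric.isClosed_closedBall.measurableSet 
      (fun y hy => by simp only; rw [f.one_of_mem_closedBall hy, one_pow])]
    rw [setIntegral_const, smul_eq_mul, mul_one]
    have : Metric.closedBall (0 : ℝ × ℝ) ((1-ε)/2) = Metric.closedBall 0 ((1-ε)/2) ×ˢ Metric.closedBall 0 ((1-ε)/2) := by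
      rw [closedBall_prod_same]; rfl
    rw [this, Measure.volume_eq_prod, measureReal_prod_prod, Real.volume_real_closedBall (by linarith)]
    ring

theorem lower_final {g E : ℝ → ℝ} (hg : IsLimitG g) (hE : IsLimitE E) {ε : ℝ} (hε : 0 < ε) (hε1 : ε < 1) :
    ∃ φ : ℝ → ℝ, ∃ c, Tendsto φ atTop (𝓝 c) ∧ 
      2 * ((1+ε)^4 / (1-ε)^2 * ∫ b in (0:ℝ)..1, g b) ≤ c ∧
      ∀ᶠ lam in atTop, ∀ L > 0, lam = L ^ (-(2:ℝ)/3) → 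
        (lam^2 * φ lam ≤ E L ∧ ∀ R > 0, BddBelow (Estrip L R '' {u | MemH1mag0 R u})) := by
  obtain ⟨χ, hχ, χc, χ0, χ1, χt, hA⟩ := exists_chi hε hε1
  set A := ∫ y, χ y ^ 2 with hAd
  set K := ∫ y, ((fderiv ℝ χ y (1,0))^2 + (fderiv ℝ χ y (0,1))^2) with hK
  have h1e : 0 < 1 - ε := by linarith
  have hA0 : 0 < A := lt_of_lt_of_le (by positivity) hA
  refine ⟨fun lam => (2 / A) * ((1+ε)^2 * ∫ b in (0:ℝ)..(1+2*ε), HH (1/(1+ε)^2) lam 1 b), _, 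
    ((HH_int_tendsto hg (by positivity) 1 (by positivity)).const_mul _).const_mul _, ?_, ?_⟩
  · have h1 := intervalIntegral.mul_integral_comp_mul_left (f := g) (a := 0) (b := 1 + 2*ε) (1/(1+ε)^2)
    have h2 : ∫ b in (0:ℝ)..(1+2*ε), g (1/(1+ε)^2 * b) = (1+ε)^2 * ∫ b in (0:ℝ)..(1/(1+ε)^2 * (1+2*ε)), g b := by
      rw [mul_zero] at h1
      rw [← h1]; field_simp
    rw [h2]
    have h3 : ∫ b in (0:ℝ)..1, g b ≤ ∫ b in (0:ℝ)..(1/(1+ε)^2 * (1+2*ε)), g b := by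
      refine g_anti hg (by positivity) ?_
      rw [one_div_mul_eq_div, div_le_one (by positivity)]
      nlinarith
    have h4 : ∫ b in (0:ℝ)..1, g b ≤ 0 := by
      have := g_anti hg (le_refl 0) zero_le_one
      simpa using this
    calc _ = 2 * ((1+ε)^4 * (1 / (1-ε)^2 * ∫ b in (0:ℝ)..1, g b)) := by ring
      _ ≤ 2 * ((1+ε)^4 * (1 / A * ∫ b in (0:ℝ)..1, g b)) := by
          have h5 : 1 / A ≤ 1 / (1-ε)^2 := one_div_le_one_div_of_le (by positivity) hA
          have := mul_le_mul_of_nonpos_right h5 h4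
          gcongr
      _ ≤ 2 * ((1+ε)^4 * (1 / A * ∫ b in (0:ℝ)..(1/(1+ε)^2 * (1+2*ε)), g b)) := by gcongr
      _ = _ := by ring
  · have : ∀ᶠ lam in atTop, K/A + 1/ε ≤ ε * lam :=
      (tendsto_id.const_mul_atTop hε).eventually_ge_atTop _
    filter_upwards [this, eventually_gt_atTop 0] with lam hlam hl L hL0 hL
    have hle : lam + K/A + 1/ε ≤ (1+ε) * lam := by linarith
    constructor
    · refine le_trans (le_of_eq ?_) (E_lower hχ χc χ0 χ1 χt hAd hK hA0 hL hl hε hε1.le hle (hE L hL0))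
      ring
    · intro R hR
      exact (egs_lower hχ χc χ0 χ1 χt hAd hK hA0 hL hl hε hε1.le hle hR).1

theorem upper_final {g E : ℝ → ℝ} (hg : IsLimitG g) (hE : IsLimitE E) {ε : ℝ} (hε : 0 < ε) (hε1 : ε < 1) :
    ∃ φ : ℝ → ℝ, ∃ c, Tendsto φ atTop (𝓝 c) ∧ 
      c ≤ 2 * ((1-ε)^3 / (1+ε) * ∫ b in (0:ℝ)..1, g b) ∧
      ∀ᶠ lam in atTop, ∀ L > 0, lam = L ^ (-(2:ℝ)/3) → E L ≤ lam^2 * φ lam := by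
  obtain ⟨_, _, _, _, hb⟩ := lower_final hg hE hε hε1
  have h1e : 0 < 1 - ε := by linarith
  refine ⟨fun lam => 2 * ((1-ε)^2 * ∫ b in (0:ℝ)..1, HH ((1+ε)/(1-ε)) lam 0 b), _, 
    ((HH_int_tendsto hg (by positivity) 0 one_pos).const_mul _).const_mul _, ?_, ?_⟩
  · have h1 := intervalIntegral.mul_integral_comp_mul_left (f := g) (a := 0) (b := 1) ((1+ε)/(1-ε))
    rw [mul_zero, mul_one] at h1
    have h2 : ∫ b in (0:ℝ)..1, g ((1+ε)/(1-ε) * b) = (1-ε)/(1+ε) * ∫ b in (0:ℝ)..((1+ε)/(1-ε)), g b := by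
      rw [← h1]; field_simp
    rw [h2]
    have h3 : ∫ b in (0:ℝ)..((1+ε)/(1-ε)), g b ≤ ∫ b in (0:ℝ)..1, g b := by
      refine g_anti hg zero_le_one ?_
      rw [one_le_div h1e]; linarith
    calc _ ≤ 2 * ((1-ε)^2 * ((1-ε)/(1+ε) * ∫ b in (0:ℝ)..1, g b)) := by gcongr
      _ = _ := by ring
  · have : ∀ᶠ lam in atTop, 1 + 1/ε ≤ ε * lam :=
      (tendsto_id.const_mul_atTop hε).eventually_ge_atTop _
    filter_upwards [hb, this, eventually_gt_atTop 0] with lam hb hlam hl L hL0 hL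
    refine le_trans (E_upper hL hl hε hε1 hlam (hb L hL0 hL).2 (hE L hL0)) (le_of_eq ?_)
    ring

lemma pow_rel {L : ℝ} (hL : 0 < L) : L ^ ((4:ℝ)/3) * (L ^ (-(2:ℝ)/3))^2 = 1 := by
  rw [← Real.rpow_natCast, ← Real.rpow_mul hL.le, ← Real.rpow_add hL]
  norm_num

theorem E_asymptotics
    (g E : ℝ → ℝ) (hg : IsLimitG g) (hE : IsLimitE E) :
    Tendsto (fun L => L ^ ((4:ℝ)/3) * E L) (nhdsWithin 0 (Ioi 0))
      (nhds (2 * ∫ b in (0:ℝ)..1, g b)) := by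
  have hlim : Tendsto (fun L : ℝ => L ^ (-(2:ℝ)/3)) (𝓝[>] 0) atTop :=
    tendsto_rpow_neg_nhdsGT_zero (by norm_num)
  set I := ∫ b in (0:ℝ)..1, g b with hI
  have hsmall : ∀ᶠ ε : ℝ in 𝓝[>] 0, 0 < ε ∧ ε < 1 := Ioo_mem_nhdsGT one_pos
  rw [tendsto_order]
  constructor
  · intro a ha
    have h1 : Tendsto (fun ε : ℝ => 2 * ((1+ε)^4 / (1-ε)^2 * I)) (𝓝[>] 0) (𝓝 (2 * ((1+0)^4 / (1-0)^2 * I))) := by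
      refine Tendsto.mono_left ?_ nhdsWithin_le_nhds
      refine ContinuousAt.tendsto (f := fun ε : ℝ => 2 * ((1+ε)^4 / (1-ε)^2 * I)) ?_
      refine continuousAt_const.mul (ContinuousAt.mul (ContinuousAt.div (by fun_prop) (by fun_prop) (by norm_num)) continuousAt_const)
    have h2 : 2 * ((1+0)^4 / (1-0)^2 * I) = 2 * I := by norm_num
    rw [h2] at h1
    obtain ⟨ε, h3, h4, h5⟩ := ((h1.eventually_const_lt ha).and hsmall).exists
    obtain ⟨φ, c, hφ, hc, hev⟩ := lower_final hg hE h4 h5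
    filter_upwards [hlim.eventually (hφ.eventually_const_lt (h3.trans_le hc)), hlim.eventually hev, self_mem_nhdsWithin] with L e1 e2 hL
    have e3 := (e2 L hL rfl).1
    have p := pow_rel hL
    have p0 : 0 < L ^ ((4:ℝ)/3) := Real.rpow_pos_of_pos hL _
    calc a < φ (L ^ (-(2:ℝ)/3)) := e1
      _ = L ^ ((4:ℝ)/3) * ((L ^ (-(2:ℝ)/3))^2 * φ (L ^ (-(2:ℝ)/3))) := by rw [← mul_assoc, p, one_mul]
      _ ≤ _ := by gcongr
  · intro a ha
    have h1 : Tendsto (fun ε : ℝ => 2 * ((1-ε)^3 / (1+ε) * I)) (𝓝[>] 0) (𝓝 (2 * ((1-0)^3 / (1+0) * I))) := by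
      refine Tendsto.mono_left ?_ nhdsWithin_le_nhds
      refine ContinuousAt.tendsto (f := fun ε : ℝ => 2 * ((1-ε)^3 / (1+ε) * I)) ?_
      refine continuousAt_const.mul (ContinuousAt.mul (ContinuousAt.div (by fun_prop) (by fun_prop) (by norm_num)) continuousAt_const)
    have h2 : 2 * ((1-0)^3 / (1+0) * I) = 2 * I := by norm_num
    rw [h2] at h1
    obtain ⟨ε, h3, h4, h5⟩ := ((h1.eventually_lt_const ha).and hsmall).exists
    obtain ⟨φ, c, hφ, hc, hev⟩ := upper_final hg hE h4 h5
    filter_upwards [hlim.eventually (hφ.eventually_lt_const (hc.trans_lt h3)), hlim.eventually hev, self_mem_nhdsWithin] with L e1 e2 hL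
    have e3 := e2 L hL rfl
    have p := pow_rel hL
    have p0 : 0 < L ^ ((4:ℝ)/3) := Real.rpow_pos_of_pos hL _
    calc _ ≤ L ^ ((4:ℝ)/3) * ((L ^ (-(2:ℝ)/3))^2 * φ (L ^ (-(2:ℝ)/3))) := by gcongr
      _ = φ (L ^ (-(2:ℝ)/3)) := by rw [← mul_assoc, p, one_mul]
      _ < a := e1

end
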